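/- There exist constants c₁, c₂ ∈ ℕ such that for every 2-VASS V = (Q,T) there is a finite set S of linear path schemes over V with the following properties: (i) for all states p,q ∈ Q and all vectors u,v ∈ ℕ², p(u) →*_{ℕ²} q(v) holds if and only if p(u) →^S_{ℕ²} q(v) holds; (ii) every ρ ∈ S has length at most (|Q| + ‖T‖)^{c₁}; and (iii) every ρ ∈ S has at most c₂·|Q|² cycles. -/

import Mathlib

namespace VASS

/-- Integer vectors of dimension `d`. -/
abbrev Vec (d : ℕ) := Fin d → ℤ

/-- A transition of a `d`-VASS: source state, update vector, target state. -/
abbrev Trans (d : ℕ) := ℕ × Vec d × ℕ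

/-- The norm of a vector: maximum of absolute values of its components. -/
def vnorm {d : ℕ} (z : Vec d) : ℕ := Finset.univ.sup fun i => (z i).natAbs

/-- The norm of a transition set. -/
def tnorm {d : ℕ} (T : Finset (Trans d)) : ℕ := T.sup fun t => vnorm t.2.1

/-- The displacement of a word of transitions. -/
def disp {d : ℕ} (π : List (Trans d)) : Vec d := (π.map fun t => t.2.1).sum

/-- `IsPathFrom p q π` : `π` is a path from `p` to `q`. -/
def IsPathFrom {d : ℕ} : ℕ → ℕ → List (Trans d) → Prop
  | p, q, [] => p = q
  | p, q, t :: rest => t.1 = p ∧ IsPathFrom t.2.2 q rest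

/-- ℕ^d as a subset of ℤ^d. -/
def NatSet (d : ℕ) : Set (Vec d) := {v | ∀ i, 0 ≤ v i}

/-- `p(u) →^π_A q(v)`. -/
def Run {d : ℕ} (T : Finset (Trans d)) (A : Set (Vec d)) (p : ℕ) (u : Vec d)
    (q : ℕ) (v : Vec d) (π : List (Trans d)) : Prop :=
  (∀ t ∈ π, t ∈ T) ∧ IsPathFrom p q π ∧ u ∈ A ∧ v = u + disp π ∧
    ∀ i, 1 ≤ i → i ≤ π.length → u + disp (π.take i) ∈ A

/-- `p(u) →*_A q(v)`. -/
def Reach {d : ℕ} (T : Finset (Trans d)) (A : Set (Vec d)) (p : ℕ) (u : Vec d)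
    (q : ℕ) (v : Vec d) : Prop := ∃ π, Run T A p u q v π

/-- A linear path scheme `α₀ β₁* α₁ ⋯ β_k* α_k`, presented as the initial
segment `α₀` together with the list of pairs `(βᵢ, αᵢ)`. -/
abbrev LPS (d : ℕ) := List (Trans d) × List (List (Trans d) × List (Trans d))

/-- The underlying word `α₀ β₁ α₁ ⋯ β_k α_k` of a linear path scheme. -/
def lpsSupport {d : ℕ} (ρ : LPS d) : List (Trans d) :=
  ρ.1 ++ (ρ.2.map fun s => s.1 ++ s.2).flatten

/-- The length of a linear path scheme. -/
def lpsLen {d : ℕ} (ρ : LPS d) : ℕ := (lpsSupport ρ).length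

/-- The number of cycles of a linear path scheme. -/
def numCycles {d : ℕ} (ρ : LPS d) : ℕ := ρ.2.length

/-- `ρ` is a linear path scheme from `p` to `q` over the transition set `T`:
its underlying word uses transitions from `T` and is a path from `p` to `q`,
and each `βᵢ` is a cycle. -/
def IsLPSFrom {d : ℕ} (T : Finset (Trans d)) (p q : ℕ) (ρ : LPS d) : Prop :=
  (∀ t ∈ lpsSupport ρ, t ∈ T) ∧ IsPathFrom p q (lpsSupport ρ) ∧
    ∀ s ∈ ρ.2, s.1 ≠ [] ∧ ∃ r, IsPathFrom r r s.1

/-- The word `α₀ β₁^{e₁} α₁ ⋯ β_k^{e_k} α_k` of a linear path scheme. -/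
def lpsWord {d : ℕ} (ρ : LPS d) (e : List ℕ) : List (Trans d) :=
  ρ.1 ++ (List.zipWith (fun s n => (List.replicate n s.1).flatten ++ s.2) ρ.2 e).flatten

/-- Membership in the language of a linear path scheme. -/
def InLang {d : ℕ} (ρ : LPS d) (π : List (Trans d)) : Prop :=
  ∃ e : List ℕ, e.length = numCycles ρ ∧ π = lpsWord ρ e

/-- `p(u) →^S_A q(v)` for a finite set `S` of linear path schemes. -/
def SReach {d : ℕ} (T : Finset (Trans d)) (S : Finset (LPS d)) (A : Set (Vec d))
    (p : ℕ) (u : Vec d) (q : ℕ) (v : Vec d) : Prop :=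
  ∃ ρ ∈ S, ∃ π, InLang ρ π ∧ Run T A p u q v π

/-- δ(ρ): the set of displacements of words in the language of `ρ`. -/
def DispSet {d : ℕ} (ρ : LPS d) : Set (Vec d) := {z | ∃ π, InLang ρ π ∧ z = disp π}

/-- A quadrant of ℤ². -/
def IsQuadrant (Z : Set (Vec 2)) : Prop :=
  ∃ ε : Fin 2 → Bool, Z = {v | ∀ i, if ε i then 0 ≤ v i else v i ≤ 0}

/-- A linear path scheme is zigzag-free if the displacements of all its cycles
lie in a single quadrant. -/
def ZigzagFree (ρ : LPS 2) : Prop :=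
  ∃ Z, IsQuadrant Z ∧ ∀ s ∈ ρ.2, disp s.1 ∈ Z

section

abbrev Cfg := ℕ × Vec 2

inductive Wk (E : Cfg → Vec 2 → Cfg → Prop) : Cfg → Cfg → ℕ → Vec 2 → Finset Cfg → Prop
  | nil (p : Cfg) : Wk E p p 0 0 {p}
  | cons {p r q : Cfg} {n : ℕ} {g g' : Vec 2} {S : Finset Cfg} :
      E p g r → Wk E r q n g' S → Wk E p q (n+1) (g+g') (insert p S)

variable {E : Cfg → Vec 2 → Cfg → Prop}

theorem Wk.cast {p q : Cfg} {n n' : ℕ} {g g' : Vec 2} {S S' : Finset Cfg}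
    (h : Wk E p q n g S) (hn : n = n') (hg : g = g') (hS : S = S') : Wk E p q n' g' S' := by
  subst hn hg hS; exact h

theorem Wk.head_mem {p q : Cfg} {n : ℕ} {g : Vec 2} {S : Finset Cfg}
    (h : Wk E p q n g S) : p ∈ S := by
  cases h <;> simp

theorem Wk.trans {p q r : Cfg} {n n' : ℕ} {g g' : Vec 2} {S S' : Finset Cfg}
    (h : Wk E p q n g S) (h' : Wk E q r n' g' S') : Wk E p r (n+n') (g+g') (S ∪ S') := by
  induction h with
  | nil p =>
    refine h'.cast (by omega) (by simp) ?_
    have := h'.head_mem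
    ext x; simp; intro hx; subst hx; exact this
  | cons e _ ih =>
    refine (Wk.cons e (ih h')).cast (by omega) (by rw [add_assoc]) ?_
    rw [Finset.insert_union]

theorem Wk.split {p q r : Cfg} {n : ℕ} {g : Vec 2} {S : Finset Cfg}
    (h : Wk E p q n g S) (hr : r ∈ S) : ∃ n1 n2 g1 g2 S1 S2, Wk E p r n1 g1 S1 ∧
      Wk E r q n2 g2 S2 ∧ n = n1 + n2 ∧ g = g1 + g2 ∧ S = S1 ∪ S2 := by
  induction h with
  | nil p =>
    simp at hr; subst hr
    exact ⟨0, 0, 0, 0, _, _, Wk.nil _, Wk.nil _, by simp, by simp, by simp⟩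
  | @cons p r' q n g g' S e w ih =>
    by_cases hp : r = p
    · subst hp
      exact ⟨0, n+1, 0, g+g', _, _, Wk.nil _, Wk.cons e w, by simp, by simp, by simp⟩
    · have : r ∈ S := by simpa [hp] using hr
      obtain ⟨n1, n2, g1, g2, S1, S2, w1, w2, rfl, rfl, rfl⟩ := ih this
      exact ⟨n1+1, n2, g+g1, g2, _, _, Wk.cons e w1, w2, by omega, by rw [add_assoc],
        by rw [Finset.insert_union]⟩

theorem Wk.insert_cycle {p q r : Cfg} {n l : ℕ} {g c : Vec 2} {S S' : Finset Cfg}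
    (h : Wk E p q n g S) (hr : r ∈ S) (hc : Wk E r r l c S') :
    Wk E p q (n+l) (g+c) (S ∪ S') := by
  obtain ⟨n1, n2, g1, g2, S1, S2, w1, w2, rfl, rfl, rfl⟩ := h.split hr
  refine ((w1.trans hc).trans w2).cast (by omega) (by abel) ?_
  ext x; simp; tauto

theorem Wk.sub {p q : Cfg} {n : ℕ} {g : Vec 2} {S F : Finset Cfg}
    (hE : ∀ p g r, E p g r → p ∈ F ∧ r ∈ F)
    (h : Wk E p q n g S) (hp : p ∈ F) : S ⊆ F := by
  induction h with
  | nil p => simpa using hp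
  | cons e w ih =>
    exact Finset.insert_subset hp (ih (hE _ _ _ e).2)

theorem Wk.bound {p q : Cfg} {n m : ℕ} {g : Vec 2} {S : Finset Cfg}
    (hE : ∀ p g r, E p g r → ∀ i, |g i| ≤ (m : ℤ))
    (h : Wk E p q n g S) (i : Fin 2) : |g i| ≤ (n * m : ℕ) := by
  induction h with
  | nil p => simp
  | cons e w ih =>
    have := hE _ _ _ e i
    rw [Pi.add_apply]
    refine (abs_add_le _ _).trans ?_
    push_cast at ih ⊢
    linarith

theorem Wk.pigeon {p q : Cfg} {n : ℕ} {g : Vec 2} {S : Finset Cfg}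
    (h : Wk E p q n g S) : n + 1 ≤ S.card ∨ ∃ r n1 l n2 g1 c g2 S1 S' S2,
      Wk E p r n1 g1 S1 ∧ Wk E r r l c S' ∧ Wk E r q n2 g2 S2 ∧ 1 ≤ l ∧ n = n1 + l + n2 ∧
      g = g1 + c + g2 ∧ S1 ⊆ S ∧ S2 ⊆ S := by
  induction h with
  | nil p => left; simp
  | @cons p r' q n g g' S e w ih =>
    rcases ih with ih | ⟨r, n1, l, n2, g1, c, g2, S1, S', S2, w1, w2, w3, hl, rfl, rfl, h1, h2⟩
    · by_cases hp : p ∈ S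
      · right
        obtain ⟨n1, n2, g1, g2, S1, S2, w1, w2, rfl, rfl, rfl⟩ := w.split hp
        refine ⟨p, 0, n1+1, n2, 0, g+g1, g2, _, _, _, Wk.nil _, Wk.cons e w1, w2, by omega,
          by omega, by abel, by simp, ?_⟩
        intro x hx; simp [hx]
      · left
        rw [Finset.card_insert_of_notMem hp]; omega
    · right
      refine ⟨r, n1+1, l, n2, g+g1, c, g2, _, _, _, Wk.cons e w1, w2, w3, hl, by omega, by abel,
        Finset.insert_subset_insert _ h1, h2.trans (Finset.subset_insert _ _)⟩

/-- weights of short cycles rooted in `S` -/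
def Cyc (E : Cfg → Vec 2 → Cfg → Prop) (N : ℕ) (S : Finset Cfg) : Set (Vec 2) :=
  {c | ∃ r ∈ S, ∃ l S', l ≤ N ∧ Wk E r r l c S'}

theorem Cyc.mono {N : ℕ} {S S' : Finset Cfg} (h : S ⊆ S') : Cyc E N S ⊆ Cyc E N S' := by
  rintro c ⟨r, hr, x⟩
  exact ⟨r, h hr, x⟩

theorem Wk.decomp_aux {p q : Cfg} {n : ℕ} {g : Vec 2} {S F : Finset Cfg}
    (hE : ∀ p g r, E p g r → p ∈ F ∧ r ∈ F)
    (h : Wk E p q n g S) (hp : p ∈ F) : ∃ m a gA SA nR gR, ∃ C : Multiset (Vec 2),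
      Wk E p m a gA SA ∧ a < F.card ∧ SA ⊆ S ∧ Wk E m q nR gR S ∧
      nR + F.card ≤ S.card * F.card ∧ (∀ c ∈ C, c ∈ Cyc E F.card S) ∧ g = gA + gR + C.sum := by
  have hpos : 0 < F.card := Finset.card_pos.2 ⟨p, hp⟩
  induction h with
  | nil p =>
    exact ⟨p, 0, 0, _, 0, 0, 0, Wk.nil _, hpos, by simp, Wk.nil _, by simp, by simp, by simp⟩
  | @cons p r q n g g' S e w ih =>
    obtain ⟨m, a, gA, SA, nR, gR, C, wA, ha, hSA, wR, hnR, hC, rfl⟩ := ih (hE _ _ _ e).2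
    by_cases hpS : p ∈ S
    · rw [Finset.insert_eq_of_mem hpS]
      have wA' := Wk.cons e wA
      have hSA' : insert p SA ⊆ S := Finset.insert_subset hpS hSA
      by_cases ha' : a + 1 < F.card
      · exact ⟨m, a+1, _, _, nR, gR, C, wA', ha', hSA', wR, hnR, hC, by abel⟩
      · rcases wA'.pigeon with h1 | ⟨r, n1, l, n2, g1, c, g2, S1, S', S2, w1, w2, w3, hl, h3, h4,
          h5, h6⟩
        · exfalso
          have := Finset.card_le_card (wA'.sub hE hp)
          omega
        · refine ⟨m, n1+n2, g1+g2, _, nR, gR, c ::ₘ C, w1.trans w3, by omega,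
            Finset.union_subset (h5.trans hSA') (h6.trans hSA'), wR, hnR, ?_, ?_⟩
          · intro c' hc'
            rcases Multiset.mem_cons.1 hc' with rfl | hc'
            · exact ⟨r, hSA' (h6 w3.head_mem), l, S', by omega, w2⟩
            · exact hC _ hc'
          · rw [Multiset.sum_cons, ← add_assoc, ← add_assoc, h4]; abel
    · refine ⟨p, 0, 0, {p}, 1 + a + nR, g + gA + gR, C, Wk.nil _, hpos, by simp, ?_, ?_, ?_, by abel⟩
      · refine (Wk.cons e (wA.trans wR)).cast (by omega) (by abel) ?_
        rw [Finset.union_eq_right.2 hSA]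
      · rw [Finset.card_insert_of_notMem hpS, add_mul]; omega
      · exact fun c hc => Cyc.mono (Finset.subset_insert _ _) (hC c hc)

theorem Wk.decomp {p q : Cfg} {n : ℕ} {g : Vec 2} {S F : Finset Cfg}
    (hE : ∀ p g r, E p g r → p ∈ F ∧ r ∈ F)
    (h : Wk E p q n g S) (hp : p ∈ F) : ∃ n0 g0, ∃ C : Multiset (Vec 2),
      Wk E p q n0 g0 S ∧ n0 ≤ F.card * F.card ∧ (∀ c ∈ C, c ∈ Cyc E F.card S) ∧
      g = g0 + C.sum := by
  obtain ⟨m, a, gA, SA, nR, gR, C, wA, ha, hSA, wR, hnR, hC, rfl⟩ := h.decomp_aux hE hp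
  refine ⟨a + nR, gA + gR, C, (wA.trans wR).cast rfl rfl (Finset.union_eq_right.2 hSA), ?_, hC, rfl⟩
  have := Nat.mul_le_mul_right F.card (Finset.card_le_card (h.sub hE hp))
  omega

end

section

theorem nsa (n : ℕ) (v : Vec 2) (i : Fin 2) : (n • v) i = (n : ℤ) * v i := by
  rw [Pi.smul_apply, nsmul_eq_mul]

def Sm (X : Set (Vec 2)) (k : ℕ) (v : Vec 2) : Prop :=
  ∃ C : Multiset (Vec 2), (∀ c ∈ C, c ∈ X) ∧ C.card ≤ k ∧ C.sum = v

def Bd (M : ℕ) (v : Vec 2) : Prop := ∀ i, |v i| ≤ (M : ℤ)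

variable {X : Set (Vec 2)}

theorem Sm.zero {k : ℕ} : Sm X k 0 := ⟨0, by simp, by simp, by simp⟩

theorem Sm.single {v : Vec 2} (h : v ∈ X) : Sm X 1 v := ⟨{v}, by simpa using h, by simp, by simp⟩

theorem Sm.mono {k k' : ℕ} {v : Vec 2} (h : Sm X k v) (hk : k ≤ k') : Sm X k' v := by
  obtain ⟨C, h1, h2, h3⟩ := h
  exact ⟨C, h1, h2.trans hk, h3⟩

theorem Sm.add {k k' : ℕ} {v v' : Vec 2} (h : Sm X k v) (h' : Sm X k' v') :
    Sm X (k + k') (v + v') := by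
  obtain ⟨C, h1, h2, h3⟩ := h
  obtain ⟨C', h1', h2', h3'⟩ := h'
  refine ⟨C + C', ?_, by rw [Multiset.card_add]; omega, by rw [Multiset.sum_add, h3, h3']⟩
  intro c hc
  rcases Multiset.mem_add.1 hc with h | h
  · exact h1 _ h
  · exact h1' _ h

theorem Sm.nsmul {k : ℕ} {v : Vec 2} (h : Sm X k v) (n : ℕ) : Sm X (n * k) (n • v) := by
  induction n with
  | zero => simpa using Sm.zero
  | succ n ih => rw [succ_nsmul, add_mul, one_mul]; exact ih.add h

theorem Sm.msum {k : ℕ} (C : Multiset (Vec 2)) (h : ∀ c ∈ C, Sm X k c) :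
    Sm X (C.card * k) C.sum := by
  induction C using Multiset.induction with
  | empty => simpa using Sm.zero
  | cons a s ih =>
    rw [Multiset.sum_cons, Multiset.card_cons, add_mul, one_mul, add_comm]
    exact (h a (by simp)).add (ih fun c hc => h c (by simp [hc])) |>.mono (by omega)

theorem card_bound {M K : ℕ} (C : Multiset (Vec 2)) (h : ∀ c ∈ C, Bd M c)
    (hK : ∀ c ∈ C, C.count c ≤ K) : C.card ≤ (2*M+1)^2 * K := by
  have h1 : C.toFinset ⊆ Fintype.piFinset fun _ : Fin 2 => Finset.Icc (-(M:ℤ)) M := by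
    intro c hc
    rw [Fintype.mem_piFinset]
    intro i
    rw [Finset.mem_Icc]
    exact abs_le.1 (h c (Multiset.mem_toFinset.1 hc) i)
  have h2 := Finset.card_le_card h1
  have h3 : (Fintype.piFinset fun _ : Fin 2 => Finset.Icc (-(M:ℤ)) M).card = (2*M+1)^2 := by
    rw [Fintype.card_piFinset]
    simp only [Int.card_Icc, Finset.prod_const, Finset.card_univ, Fintype.card_fin]
    congr 1; omega
  rw [← Multiset.toFinset_sum_count_eq]
  calc _ ≤ ∑ a ∈ C.toFinset, K := Finset.sum_le_sum fun a ha => hK a (Multiset.mem_toFinset.1 ha)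
    _ = C.toFinset.card * K := by simp
    _ ≤ _ := Nat.mul_le_mul_right _ (h2.trans h3.le)

theorem pairing {M k : ℕ} (hM : 1 ≤ M) (f : Fin 2) : ∀ (n : ℕ) (C : Multiset (Vec 2)), C.card = n →
    (∀ c ∈ C, Bd M c ∧ Sm X k c) → ∃ e, ∃ C2 : Multiset (Vec 2),
      Sm X ((2*M+1)^2*M*k) e ∧ C.sum = e + C2.sum ∧ (∀ c ∈ C2, Bd (2*M^2) c ∧ Sm X (2*M*k) c) ∧
      (∃ σ : ℤ, (σ = 1 ∨ σ = -1) ∧ ∀ c ∈ C2, 0 ≤ σ * c f) ∧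
      ∀ (g : Fin 2) (τ : ℤ), (∀ c ∈ C, 0 ≤ τ * c g) → ∀ c ∈ C2, 0 ≤ τ * c g := by
  intro n
  induction n using Nat.strong_induction_on with
  | _ n ih =>
  intro C hn hC
  by_cases hxy : ∃ x ∈ C, ∃ y ∈ C, 0 < x f ∧ y f < 0 ∧ M ≤ C.count x ∧ M ≤ C.count y
  · obtain ⟨x, hx, y, hy, hxf, hyf, hcx, hcy⟩ := hxy
    have hxM := abs_le.1 ((hC x hx).1 f)
    have hyM := abs_le.1 ((hC y hy).1 f)
    obtain ⟨a, ha⟩ : ∃ a : ℕ, (a : ℤ) = - y f := ⟨(y f).natAbs, by omega⟩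
    obtain ⟨b, hb⟩ : ∃ b : ℕ, (b : ℤ) = x f := ⟨(x f).natAbs, by omega⟩
    have hne : x ≠ y := by rintro rfl; omega
    have hle : Multiset.replicate a x + Multiset.replicate b y ≤ C := by
      rw [Multiset.le_iff_count]
      intro z
      rw [Multiset.count_add, Multiset.count_replicate, Multiset.count_replicate]
      by_cases h1 : x = z
      · subst h1; rw [if_pos rfl, if_neg (Ne.symm hne)]; omega
      · by_cases h2 : y = z
        · subst h2; rw [if_pos rfl, if_neg h1]; omega
        · rw [if_neg h1, if_neg h2]; omega
    obtain ⟨C0, rfl⟩ := Multiset.le_iff_exists_add.1 hle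
    have hsub : ∀ c ∈ C0, c ∈ Multiset.replicate a x + Multiset.replicate b y + C0 :=
      fun c hc => Multiset.mem_add.2 (Or.inr hc)
    obtain ⟨e, C2, h1, h2, h3, ⟨σ, hσ, h4⟩, h5⟩ := ih C0.card (by
      rw [← hn, Multiset.card_add, Multiset.card_add, Multiset.card_replicate]; omega) C0 rfl
      (fun c hc => hC c (hsub c hc))
    refine ⟨e, (a • x + b • y) ::ₘ C2, h1, ?_, ?_, ⟨σ, hσ, ?_⟩, ?_⟩
    · rw [Multiset.sum_add, Multiset.sum_add, Multiset.sum_replicate, Multiset.sum_replicate,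
        Multiset.sum_cons, h2]; abel
    · intro c hc
      rcases Multiset.mem_cons.1 hc with rfl | hc
      · constructor
        · intro i
          have e1 := (hC x hx).1 i
          have e2 := (hC y hy).1 i
          simp only [Pi.add_apply, nsa]
          have ha' : (a : ℤ) ≤ M := by omega
          have hb' : (b : ℤ) ≤ M := by omega
          calc |(a : ℤ) * x i + b * y i| ≤ |(a : ℤ) * x i| + |(b : ℤ) * y i| := abs_add_le _ _
            _ = (a : ℤ) * |x i| + b * |y i| := by rw [abs_mul, abs_mul, Nat.abs_cast, Nat.abs_cast]
            _ ≤ M * M + M * M := by gcongr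
            _ = _ := by push_cast; ring
        · refine (((hC x hx).2.nsmul a).add ((hC y hy).2.nsmul b)).mono ?_
          rw [← add_mul]
          exact Nat.mul_le_mul_right _ (by omega)
      · exact h3 c hc
    · intro c hc
      rcases Multiset.mem_cons.1 hc with rfl | hc
      · simp only [Pi.add_apply, nsa, ha, hb]
        apply le_of_eq; ring
      · exact h4 c hc
    · intro g τ h c hc
      rcases Multiset.mem_cons.1 hc with rfl | hc
      · have e1 := h x hx
        have e2 := h y hy
        simp only [Pi.add_apply, nsa]
        have : τ * (↑a * x g + ↑b * y g) = a * (τ * x g) + b * (τ * y g) := by ring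
        rw [this]; positivity
      · exact h5 g τ (fun c hc => h c (hsub c hc)) c hc
  · have key : ∃ σ : ℤ, (σ = 1 ∨ σ = -1) ∧ ∀ c ∈ C, σ * c f < 0 → C.count c ≤ M := by
      by_contra hcon
      push Not at hcon
      obtain ⟨y, hy, hy1, hy2⟩ := hcon 1 (Or.inl rfl)
      obtain ⟨x, hx, hx1, hx2⟩ := hcon (-1) (Or.inr rfl)
      exact hxy ⟨x, hx, y, hy, by linarith, by linarith, hx2.le, hy2.le⟩
    obtain ⟨σ, hσ, hc⟩ := key
    have hsplit := Multiset.filter_add_not (fun c : Vec 2 => σ * c f < 0) C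
    refine ⟨(C.filter fun c => σ * c f < 0).sum, C.filter fun c => ¬ σ * c f < 0, ?_, ?_, ?_,
      ⟨σ, hσ, ?_⟩, ?_⟩
    · refine (Sm.msum _ ?_).mono (Nat.mul_le_mul_right k (card_bound _ (M := M) (K := M) ?_ ?_))
      · intro c h; exact (hC c (Multiset.mem_filter.1 h).1).2
      · intro c h; exact (hC c (Multiset.mem_filter.1 h).1).1
      · intro c h
        exact (Multiset.count_le_of_le c (Multiset.filter_le _ _)).trans
          (hc c (Multiset.mem_filter.1 h).1 (Multiset.mem_filter.1 h).2)
    · rw [← Multiset.sum_add, hsplit]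
    · intro c h
      have := hC c (Multiset.mem_filter.1 h).1
      refine ⟨fun i => (this.1 i).trans ?_, this.2.mono ?_⟩
      · have : M ≤ 2 * M^2 := by nlinarith
        exact_mod_cast this
      · exact Nat.le_mul_of_pos_left k (by omega) 
    · intro c h
      exact not_lt.1 (Multiset.mem_filter.1 h).2
    · intro g τ h c h'
      exact h c (Multiset.mem_filter.1 h').1

theorem dtrick {M k D : ℕ} (hD : 1 ≤ D) (b1 b2 : Vec 2) : ∀ (n : ℕ) (C : Multiset (Vec 2)),
    C.card = n →
    (∀ c ∈ C, Bd M c ∧ Sm X k c ∧ ∃ y1 y2 : ℕ, D • c = y1 • b1 + y2 • b2) →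
    ∃ e, ∃ n1 n2 : ℕ, Sm X ((2*M+1)^2*D*k) e ∧ C.sum = e + n1 • b1 + n2 • b2 := by
  intro n
  induction n using Nat.strong_induction_on with
  | _ n ih =>
  intro C hn hC
  by_cases hx : ∃ x ∈ C, D ≤ C.count x
  · obtain ⟨x, hx, hc⟩ := hx
    obtain ⟨C0, rfl⟩ := Multiset.le_iff_exists_add.1 (Multiset.le_count_iff_replicate_le.1 hc)
    have hsub : ∀ c ∈ C0, c ∈ Multiset.replicate D x + C0 :=
      fun c hc => Multiset.mem_add.2 (Or.inr hc)
    obtain ⟨e, n1, n2, h1, h2⟩ := ih C0.card (by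
      rw [← hn, Multiset.card_add, Multiset.card_replicate]; omega) C0 rfl
      (fun c hc => hC c (hsub c hc))
    obtain ⟨y1, y2, hy⟩ := (hC x hx).2.2
    refine ⟨e, y1 + n1, y2 + n2, h1, ?_⟩
    rw [Multiset.sum_add, Multiset.sum_replicate, h2, hy, add_nsmul, add_nsmul]; abel
  · push Not at hx
    refine ⟨C.sum, 0, 0, ?_, by simp⟩
    exact (Sm.msum _ fun c hc => (hC c hc).2.1).mono
      (Nat.mul_le_mul_right k (card_bound _ (fun c hc => (hC c hc).1) fun c hc => (hx c hc).le))

def cr (a b : Vec 2) : ℤ := a 0 * b 1 - a 1 * b 0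

def Qd (σ : Fin 2 → ℤ) (v : Vec 2) : Prop := ∀ i, 0 ≤ σ i * v i

def hh (σ : Fin 2 → ℤ) (v : Vec 2) : ℤ := σ 0 * v 0 + σ 1 * v 1

def Sg (σ : Fin 2 → ℤ) : Prop := ∀ i, σ i = 1 ∨ σ i = -1

theorem hh_nonneg {σ : Fin 2 → ℤ} {v : Vec 2} (h : Qd σ v) : 0 ≤ hh σ v :=
  add_nonneg (h 0) (h 1)

theorem hh_pos {σ : Fin 2 → ℤ} {v : Vec 2} (hσ : Sg σ) (h : Qd σ v) (hv : v ≠ 0) : 0 < hh σ v := by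
  rcases (hh_nonneg h).lt_or_eq with h1 | h1
  · exact h1
  · exfalso; apply hv
    have a0 := h 0
    have a1 := h 1
    unfold hh at h1
    have e0 : σ 0 * v 0 = 0 := by omega
    have e1 : σ 1 * v 1 = 0 := by omega
    ext i
    have hne : σ i ≠ 0 := by rcases hσ i with h | h <;> rw [h] <;> decide
    fin_cases i
    · exact (mul_eq_zero.1 e0).resolve_left hne
    · exact (mul_eq_zero.1 e1).resolve_left hne

theorem cr_trans {σ : Fin 2 → ℤ} {a b c : Vec 2} (hσ : Sg σ) (ha : Qd σ a) (hb : Qd σ b)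
    (hc : Qd σ c) (hb0 : b ≠ 0) (h1 : 0 ≤ cr a b) (h2 : 0 ≤ cr b c) : 0 ≤ cr a c := by
  have h : cr a c * hh σ b = cr a b * hh σ c + cr b c * hh σ a := by
    unfold cr hh; ring
  have hb' := hh_pos hσ hb hb0
  have h3 : 0 ≤ cr a c * hh σ b := by
    rw [h]; exact add_nonneg (mul_nonneg h1 (hh_nonneg hc)) (mul_nonneg h2 (hh_nonneg ha))
  exact nonneg_of_mul_nonneg_left h3 hb'

theorem cr_swap (a b : Vec 2) : cr a b = - cr b a := by unfold cr; ring

theorem extreme {σ : Fin 2 → ℤ} (hσ : Sg σ) (C : Multiset (Vec 2)) (hC : ∀ c ∈ C, Qd σ c ∧ c ≠ 0)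
    (hne : C ≠ 0) : ∃ d1 ∈ C, ∃ d2 ∈ C, ∀ c ∈ C, 0 ≤ cr d1 c ∧ 0 ≤ cr c d2 := by
  induction C using Multiset.induction with
  | empty => exact absurd rfl hne
  | cons a s ih =>
    by_cases hs : s = 0
    · subst hs
      refine ⟨a, by simp, a, by simp, ?_⟩
      intro c hc
      have : c = a := by simpa using hc
      subst this
      unfold cr; constructor <;> (apply le_of_eq; ring)
    · obtain ⟨d1, hd1, d2, hd2, h⟩ := ih (fun c hc => hC c (by simp [hc])) hs
      have ha := hC a (by simp)
      have e1 : ∃ d ∈ a ::ₘ s, ∀ c ∈ a ::ₘ s, 0 ≤ cr d c := by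
        have hd := hC d1 (by simp [hd1])
        rcases le_total 0 (cr d1 a) with h1 | h1
        · refine ⟨d1, by simp [hd1], ?_⟩
          intro c hc
          rcases Multiset.mem_cons.1 hc with rfl | hc
          · exact h1
          · exact (h c hc).1
        · refine ⟨a, by simp, ?_⟩
          rw [cr_swap] at h1
          intro c hc
          rcases Multiset.mem_cons.1 hc with rfl | hc'
          · unfold cr; apply le_of_eq; ring
          · exact cr_trans hσ ha.1 hd.1 (hC c hc).1 hd.2 (by linarith) (h c hc').1
      have e2 : ∃ d ∈ a ::ₘ s, ∀ c ∈ a ::ₘ s, 0 ≤ cr c d := by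
        have hd := hC d2 (by simp [hd2])
        rcases le_total 0 (cr a d2) with h1 | h1
        · refine ⟨d2, by simp [hd2], ?_⟩
          intro c hc
          rcases Multiset.mem_cons.1 hc with rfl | hc
          · exact h1
          · exact (h c hc).2
        · refine ⟨a, by simp, ?_⟩
          rw [cr_swap] at h1
          intro c hc
          rcases Multiset.mem_cons.1 hc with rfl | hc'
          · unfold cr; apply le_of_eq; ring
          · exact cr_trans hσ (hC c hc).1 hd.1 ha.1 hd.2 (h c hc').2 (by linarith)
      obtain ⟨a1, m1, k1⟩ := e1
      obtain ⟨a2, m2, k2⟩ := e2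
      exact ⟨a1, m1, a2, m2, fun c hc => ⟨k1 c hc, k2 c hc⟩⟩

theorem cr_bound {M M' : ℕ} {a b : Vec 2} (ha : Bd M a) (hb : Bd M' b) :
    |cr a b| ≤ (2 * M * M' : ℕ) := by
  unfold cr
  calc _ ≤ |a 0 * b 1| + |a 1 * b 0| := abs_sub _ _
    _ = |a 0| * |b 1| + |a 1| * |b 0| := by rw [abs_mul, abs_mul]
    _ ≤ M * M' + M * M' := by
      have h1 := ha 0; have h2 := ha 1; have h3 := hb 0; have h4 := hb 1
      gcongr
    _ = _ := by push_cast; ring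

theorem hh_bound {M : ℕ} {σ : Fin 2 → ℤ} {a : Vec 2} (hσ : Sg σ) (ha : Bd M a) :
    hh σ a ≤ (2 * M : ℕ) := by
  have h1 := abs_le.1 (ha 0); have h2 := abs_le.1 (ha 1)
  unfold hh
  push_cast
  rcases hσ 0 with h | h <;> rcases hσ 1 with h' | h' <;> rw [h, h'] <;> linarith

theorem common_den {M : ℕ} (hM : 1 ≤ M) {σ : Fin 2 → ℤ} (hσ : Sg σ) (C : Multiset (Vec 2))
    (hC : ∀ c ∈ C, Qd σ c ∧ c ≠ 0 ∧ Bd M c) {d1 d2 : Vec 2} (m1 : d1 ∈ C) (m2 : d2 ∈ C)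
    (h : ∀ c ∈ C, 0 ≤ cr d1 c ∧ 0 ≤ cr c d2) :
    ∃ D : ℕ, 1 ≤ D ∧ D ≤ 2 * M * M ∧ ∀ c ∈ C, ∃ y1 y2 : ℕ, D • c = y1 • d1 + y2 • d2 := by
  obtain ⟨q1, z1, bd1⟩ := hC d1 m1
  obtain ⟨q2, z2, bd2⟩ := hC d2 m2
  rcases (h d2 m2).1.lt_or_eq with hpos | hz
  · refine ⟨(cr d1 d2).toNat, by omega, ?_, ?_⟩
    · have := abs_le.1 (cr_bound bd1 bd2)
      omega
    · intro c hc
      refine ⟨(cr c d2).toNat, (cr d1 c).toNat, ?_⟩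
      have e1 := Int.toNat_of_nonneg (h c hc).1
      have e2 := Int.toNat_of_nonneg (h c hc).2
      have e3 := Int.toNat_of_nonneg hpos.le
      ext i
      simp only [Pi.add_apply, nsa, e1, e2, e3]
      fin_cases i <;> simp [cr] <;> ring
  · have hp1 := hh_pos hσ q1 z1
    have hp2 := hh_pos hσ q2 z2
    have key : ∀ c ∈ C, cr d1 c = 0 := by
      intro c hc
      have h1 := (h c hc).1
      have h2 := (h c hc).2
      have e : cr c d1 * hh σ d2 = cr c d2 * hh σ d1 + cr d2 d1 * hh σ c := by
        unfold cr hh; ring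
      have hz' : cr d2 d1 = 0 := by rw [cr_swap]; omega
      rw [hz', zero_mul, add_zero] at e
      have : 0 ≤ cr c d1 * hh σ d2 := by rw [e]; positivity
      have h3 := nonneg_of_mul_nonneg_left this hp2
      rw [cr_swap] at h3; omega
    refine ⟨(hh σ d1).toNat, by omega, ?_, ?_⟩
    · have := hh_bound hσ bd1
      have : 2 * M ≤ 2 * M * M := Nat.le_mul_of_pos_right _ hM
      omega
    · intro c hc
      refine ⟨(hh σ c).toNat, 0, ?_⟩
      have e1 := Int.toNat_of_nonneg (hh_nonneg (hC c hc).1)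
      have e2 := Int.toNat_of_nonneg hp1.le
      have e3 := key c hc
      ext i
      simp only [Pi.add_apply, nsa, e1, e2]
      unfold cr at e3
      unfold hh
      fin_cases i
      · change (σ 0 * d1 0 + σ 1 * d1 1) * c 0 = (σ 0 * c 0 + σ 1 * c 1) * d1 0 + ((0:ℕ):ℤ) * d2 0
        push_cast
        linear_combination (-σ 1) * e3
      · change (σ 0 * d1 0 + σ 1 * d1 1) * c 1 = (σ 0 * c 0 + σ 1 * c 1) * d1 1 + ((0:ℕ):ℤ) * d2 1
        push_cast
        linear_combination (σ 0) * e3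

end

section

theorem msum_nonneg (f : Vec 2 →+ ℤ) (B : Multiset (Vec 2)) (h : ∀ c ∈ B, 0 ≤ f c) :
    0 ≤ f B.sum := by
  induction B using Multiset.induction with
  | empty => simp
  | cons a s ih =>
    rw [Multiset.sum_cons, map_add]
    exact add_nonneg (h a (by simp)) (ih fun c hc => h c (by simp [hc]))

theorem exists_pos_of (f : Vec 2 →+ ℤ) (B : Multiset (Vec 2)) (h : 0 < f B.sum) :
    ∃ c ∈ B, 0 < f c := by
  by_contra hcon
  push Not at hcon
  have := msum_nonneg (-f) B (fun c hc => by simpa using hcon c hc)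
  simp at this; omega

theorem exists_neg_of (f : Vec 2 →+ ℤ) (B : Multiset (Vec 2)) (h : f B.sum = 0) {c : Vec 2}
    (hc : c ∈ B) (hp : 0 < f c) : ∃ c ∈ B, f c < 0 := by
  by_contra hcon
  push Not at hcon
  obtain ⟨s, rfl⟩ := Multiset.exists_cons_of_mem hc
  rw [Multiset.sum_cons, map_add] at h
  have := msum_nonneg f s (fun c hc => hcon c (by simp [hc]))
  omega

def crHom (d : Vec 2) : Vec 2 →+ ℤ where
  toFun := cr d
  map_zero' := by simp [cr]
  map_add' := by intro a b; simp [cr]; ring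

def evHom (i : Fin 2) : Vec 2 →+ ℤ where
  toFun := fun v => v i
  map_zero' := rfl
  map_add' := fun _ _ => rfl

theorem par {d c : Vec 2} (h : cr d c = 0) (i : Fin 2) (j : Fin 2) : d i * c j = c i * d j := by
  unfold cr at h
  fin_cases i <;> fin_cases j <;> simp <;> linarith

theorem sgn_exists (z : ℤ) : ∃ s : ℤ, (s = 1 ∨ s = -1) ∧ s * z = |z| := by
  rcases le_total 0 z with h | h
  · exact ⟨1, Or.inl rfl, by rw [abs_of_nonneg h]; ring⟩
  · exact ⟨-1, Or.inr rfl, by rw [abs_of_nonpos h]; ring⟩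

theorem connect {X : Set (Vec 2)} {M K k M0 : ℕ} (hX : ∀ c ∈ X, Bd M c) {d t0 : Vec 2}
    (hd : d ≠ 0) (hK : Bd K d) (hS : Sm X k d) (ht : Bd M0 t0) :
    ∃ lam : ℕ, 1 ≤ lam ∧ lam ≤ 8*K*M*M0 + 1 + M ∧ ((∃ c ∈ X, ∃ a ≤ K, lam • d = a • c) ∨
      ((∃ c ∈ X, cr d c ≠ 0) ∧ ∃ x v, 1 ≤ x ∧ x ≤ K*(2*K*M) ∧
        Sm X (K*(2*K*M0) + (4*K*M*M0+1)*k) v ∧ lam • d = x • t0 + v)) := by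
  obtain ⟨B, hB, hBk, hBs⟩ := id hS
  obtain ⟨i, hi⟩ : ∃ i, d i ≠ 0 := by
    by_contra hcon; push Not at hcon; exact hd (funext hcon)
  have hdi : 0 < |d i| := abs_pos.2 hi
  obtain ⟨s, hs, hsd⟩ := sgn_exists (d i)
  have hdn : ((d i).natAbs : ℤ) = |d i| := Int.natCast_natAbs _
  have hdK : (d i).natAbs ≤ K := by have := hK i; omega
  by_cases hall : ∀ c ∈ B, cr d c = 0
  · obtain ⟨c, hc, hcp⟩ := exists_pos_of (s • evHom i) B (by
      rw [hBs]; change 0 < s • d i; rw [smul_eq_mul]; omega)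
    change 0 < s * c i at hcp
    have hcM := abs_le.1 (hX c (hB c hc) i)
    refine ⟨(c i).natAbs, ?_, ?_, Or.inl ⟨c, hB c hc, (d i).natAbs, hdK, ?_⟩⟩
    · rcases hs with rfl | rfl <;> omega
    · have : (c i).natAbs ≤ M := by omega
      omega
    · have e1 : ((c i).natAbs : ℤ) = s * c i := by rcases hs with rfl | rfl <;> omega
      have e2 : ((d i).natAbs : ℤ) = s * d i := by rw [hsd, hdn]
      ext j
      rw [nsa, nsa, e1, e2, mul_assoc, mul_assoc, par (hall c hc) i j]
  · push Not at hall
    obtain ⟨c, hc, hne⟩ := hall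
    have hz : crHom d B.sum = 0 := by rw [hBs]; change cr d d = 0; unfold cr; ring
    have hz' : (-crHom d) B.sum = 0 := by
      rw [AddMonoidHom.neg_apply, hz, neg_zero]
    have hboth : (∃ c ∈ B, 0 < cr d c) ∧ (∃ c ∈ B, cr d c < 0) := by
      rcases lt_or_gt_of_ne hne with h | h
      · obtain ⟨c', hc', h'⟩ := exists_neg_of (-crHom d) B hz' hc (by
          change 0 < - cr d c; omega)
        change - cr d c' < 0 at h'
        exact ⟨⟨c', hc', by omega⟩, ⟨c, hc, h⟩⟩
      · obtain ⟨c', hc', h'⟩ := exists_neg_of (crHom d) B hz hc h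
        exact ⟨⟨c, hc, h⟩, ⟨c', hc', h'⟩⟩
    obtain ⟨c, hc, hcne, hcs⟩ : ∃ c ∈ B, cr d c ≠ 0 ∧
        |cr d c| * cr d t0 + |cr d t0| * cr d c = 0 := by
      rcases le_total 0 (cr d t0) with h | h
      · obtain ⟨c, hc, hc'⟩ := hboth.2
        refine ⟨c, hc, hc'.ne, ?_⟩
        rw [abs_of_neg hc', abs_of_nonneg h]; ring
      · obtain ⟨c, hc, hc'⟩ := hboth.1
        refine ⟨c, hc, hc'.ne', ?_⟩
        rw [abs_of_pos hc', abs_of_nonpos h]; ring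
    have hcX := hX c (hB c hc)
    set x := (cr d c).natAbs with hx
    set y := (cr d t0).natAbs with hy
    have hxz : (x : ℤ) = |cr d c| := Int.natCast_natAbs _
    have hyz : (y : ℤ) = |cr d t0| := Int.natCast_natAbs _
    have hx1 : 1 ≤ x := by omega
    have hxb : x ≤ 2*K*M := by have := cr_bound hK hcX; omega
    have hyb : y ≤ 2*K*M0 := by have := cr_bound hK ht; omega
    set z : Vec 2 := x • t0 + y • c with hzdef
    have hcrz : cr d z = 0 := by
      have : crHom d z = 0 := by
        rw [hzdef, map_add, map_nsmul, map_nsmul, nsmul_eq_mul, nsmul_eq_mul, hxz, hyz]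
        exact hcs
      exact this
    have hzb : |z i| ≤ (4*K*M*M0 : ℕ) := by
      rw [hzdef, Pi.add_apply, nsa, nsa]
      have h1 := ht i
      have h2 := hcX i
      have h3 : (x:ℤ) ≤ (2*K*M : ℕ) := by exact_mod_cast hxb
      have h4 : (y:ℤ) ≤ (2*K*M0 : ℕ) := by exact_mod_cast hyb
      calc _ ≤ |(x:ℤ) * t0 i| + |(y:ℤ) * c i| := abs_add_le _ _
        _ = (x:ℤ) * |t0 i| + y * |c i| := by rw [abs_mul, abs_mul, Nat.abs_cast, Nat.abs_cast]
        _ ≤ (2*K*M : ℕ) * M0 + (2*K*M0 : ℕ) * M := by gcongr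
        _ = _ := by push_cast; ring
    set n := (z i).natAbs + 1 with hn
    have hnb : n ≤ 4*K*M*M0 + 1 := by have := Int.natCast_natAbs (z i); omega
    have hsz : -(n:ℤ) < s * z i ∧ s * z i < n := by
      rcases hs with rfl | rfl <;> omega
    refine ⟨(s * z i + n).toNat, by omega, ?_, Or.inr ⟨⟨c, hB c hc, hcne⟩, (d i).natAbs * x,
      ((d i).natAbs * y) • c + n • d, ?_, ?_, ?_, ?_⟩⟩
    · have : 8*K*M*M0 = 2*(4*K*M*M0) := by ring
      omega
    · exact Nat.mul_pos (by omega) hx1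
    · exact Nat.mul_le_mul hdK hxb
    · refine (((Sm.single (hB c hc)).nsmul _).add (hS.nsmul n)).mono ?_
      rw [mul_one]
      exact Nat.add_le_add (Nat.mul_le_mul hdK hyb) (Nat.mul_le_mul_right _ hnb)
    · have e2 : ((d i).natAbs : ℤ) = s * d i := by rw [hsd, hdn]
      ext j
      have hp := par hcrz i j
      rw [nsa, Int.toNat_of_nonneg (by omega)]
      have hzj : z j = x * t0 j + y * c j := by rw [hzdef, Pi.add_apply, nsa, nsa]
      simp only [Pi.add_apply, nsa, Nat.cast_mul, e2]
      rw [hzj] at hp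
      linear_combination (-s) * hp

/-- Good loop vectors -/
def Good (X : Set (Vec 2)) (t0 : Vec 2) (a0 x0 k0 : ℕ) (b : Vec 2) : Prop :=
  b = 0 ∨ (∃ c ∈ X, ∃ a ≤ a0, b = a • c) ∨
    ((∃ d, ∃ c ∈ X, (∃ k, Sm X k d) ∧ cr d c ≠ 0) ∧ ∃ x v, 1 ≤ x ∧ x ≤ x0 ∧ Sm X k0 v ∧
      b = x • t0 + v)

def fM2 (M : ℕ) := 2*M^2
def fk2 (M : ℕ) := 2*M*1
def fM3 (M : ℕ) := 2*(fM2 M)^2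
def fk3 (M : ℕ) := 2*(fM2 M)*fk2 M
def fLam (M M0 : ℕ) := 8*fM3 M*M*M0 + 1 + M
def fx (M : ℕ) := fM3 M*(2*fM3 M*M)
def fk (M M0 : ℕ) := fM3 M*(2*fM3 M*M0) + (4*fM3 M*M*M0+1)*fk3 M
def fD (M M0 : ℕ) := 2*fM3 M*fM3 M*(fLam M M0*fLam M M0)
def fe (M M0 : ℕ) := (2*M+1)^2*M*1 + (2*fM2 M+1)^2*fM2 M*fk2 M + (2*fM3 M+1)^2*fD M M0*fk3 M

theorem Qd.nsmul {σ : Fin 2 → ℤ} {v : Vec 2} (h : Qd σ v) (n : ℕ) : Qd σ (n • v) := by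
  intro i
  have := h i
  rw [nsa, mul_left_comm]; positivity

theorem vecmain {X : Set (Vec 2)} {M M0 : ℕ} (hM : 1 ≤ M) (hX : ∀ c ∈ X, Bd M c) {t0 : Vec 2}
    (ht : Bd M0 t0) (C : Multiset (Vec 2)) (hC : ∀ c ∈ C, c ∈ X) :
    ∃ σ, Sg σ ∧ ∃ e b1 b2, ∃ n1 n2 : ℕ, Sm X (fe M M0) e ∧ C.sum = e + n1 • b1 + n2 • b2 ∧
      Qd σ b1 ∧ Qd σ b2 ∧ Good X t0 (fM3 M) (fx M) (fk M M0) b1 ∧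
      Good X t0 (fM3 M) (fx M) (fk M M0) b2 := by
  obtain ⟨e1, C2, he1, hs1, hC2, ⟨σ0, hσ0, hq0⟩, -⟩ := pairing (X := X) (k := 1) hM 0 _ C rfl
    (fun c hc => ⟨hX c (hC c hc), Sm.single (hC c hc)⟩)
  have hM2 : 1 ≤ fM2 M := by unfold fM2; nlinarith
  obtain ⟨e2, C3, he2, hs2, hC3, ⟨σ1, hσ1, hq1⟩, hpres⟩ := pairing (X := X) (M := fM2 M)
    (k := fk2 M) hM2 1 _ C2 rfl hC2
  have hq0' := hpres 0 σ0 hq0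
  change ∀ c ∈ C3, Bd (fM3 M) c ∧ Sm X (fk3 M) c at hC3
  have hM3 : 1 ≤ fM3 M := by unfold fM3; nlinarith
  let σ : Fin 2 → ℤ := ![σ0, σ1]
  have hσ : Sg σ := by
    intro i; fin_cases i
    · exact hσ0
    · exact hσ1
  have hQ : ∀ c ∈ C3, Qd σ c := by
    intro c hc i; fin_cases i
    · exact hq0' c hc
    · exact hq1 c hc
  set C4 := C3.filter (fun c => c ≠ 0) with hC4
  have hsum : C3.sum = C4.sum := by
    conv_lhs => rw [← Multiset.filter_add_not (fun c : Vec 2 => c ≠ 0) C3, Multiset.sum_add]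
    rw [← hC4, Multiset.sum_eq_zero (s := C3.filter fun c => ¬ (c ≠ 0)), add_zero]
    intro x hx
    simpa using (Multiset.mem_filter.1 hx).2
  have hC4' : ∀ c ∈ C4, Qd σ c ∧ c ≠ 0 ∧ Bd (fM3 M) c ∧ Sm X (fk3 M) c := by
    intro c hc
    obtain ⟨h1, h2⟩ := Multiset.mem_filter.1 hc
    exact ⟨hQ c h1, h2, hC3 c h1⟩
  refine ⟨σ, hσ, ?_⟩
  by_cases hz : C4 = 0
  · refine ⟨e1 + e2, 0, 0, 0, 0, (he1.add he2).mono (by unfold fe; omega), ?_, ?_, ?_,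
      Or.inl rfl, Or.inl rfl⟩
    · rw [hs1, hs2, hsum, hz]; simp
    · intro i; simp
    · intro i; simp
  · obtain ⟨d1, m1, d2, m2, hext⟩ := extreme hσ C4 (fun c hc => ⟨(hC4' c hc).1, (hC4' c hc).2.1⟩) hz
    obtain ⟨D, hD1, hDb, hD⟩ := common_den hM3 hσ C4 (fun c hc => ⟨(hC4' c hc).1, (hC4' c hc).2.1,
      (hC4' c hc).2.2.1⟩) m1 m2 hext
    obtain ⟨q1, z1, bd1, sm1⟩ := hC4' d1 m1
    obtain ⟨q2, z2, bd2, sm2⟩ := hC4' d2 m2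
    obtain ⟨l1, hl1, hl1b, H1⟩ := connect hX z1 bd1 sm1 ht
    obtain ⟨l2, hl2, hl2b, H2⟩ := connect hX z2 bd2 sm2 ht
    have hDD : 1 ≤ D * (l1 * l2) := Nat.mul_pos hD1 (Nat.mul_pos hl1 hl2)
    obtain ⟨e3, n1, n2, he3, hs3⟩ := dtrick (X := X) (M := fM3 M) (k := fk3 M) hDD
      (l1 • d1) (l2 • d2) _ C4 rfl (by
        intro c hc
        obtain ⟨-, -, h3, h4⟩ := hC4' c hc
        obtain ⟨y1, y2, hy⟩ := hD c hc
        refine ⟨h3, h4, y1 * l2, y2 * l1, ?_⟩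
        have : (D * (l1 * l2)) • c = (l1*l2) • (D • c) := by rw [smul_smul, mul_comm]
        rw [this, hy, smul_add, smul_smul, smul_smul, smul_smul, smul_smul]
        congr 2 <;> ring)
    refine ⟨e1 + e2 + e3, l1 • d1, l2 • d2, n1, n2, ?_, ?_, q1.nsmul _, q2.nsmul _, ?_, ?_⟩
    · refine ((he1.add he2).add he3).mono ?_
      unfold fe
      have : D * (l1 * l2) ≤ fD M M0 := by
        unfold fD
        exact Nat.mul_le_mul hDb (Nat.mul_le_mul hl1b hl2b)
      gcongr
    · rw [hs1, hs2, hsum, hs3]; abel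
    · rcases H1 with H | ⟨⟨c, hc, hcr⟩, H⟩
      · exact Or.inr (Or.inl H)
      · exact Or.inr (Or.inr ⟨⟨d1, c, hc, ⟨_, sm1⟩, hcr⟩, H⟩)
    · rcases H2 with H | ⟨⟨c, hc, hcr⟩, H⟩
      · exact Or.inr (Or.inl H)
      · exact Or.inr (Or.inr ⟨⟨d2, c, hc, ⟨_, sm2⟩, hcr⟩, H⟩)

end

section

variable {E : Cfg → Vec 2 → Cfg → Prop}

def W (E : Cfg → Vec 2 → Cfg → Prop) (p q : Cfg) (n : ℕ) (g : Vec 2) : Prop := ∃ S, Wk E p q n g S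

theorem Wk.repeat {p : Cfg} {n : ℕ} {g : Vec 2} {S : Finset Cfg} (h : Wk E p p n g S) (x : ℕ) :
    Wk E p p ((x+1)*n) ((x+1) • g) S := by
  induction x with
  | zero => exact h.cast (by simp) (by simp) rfl
  | succ x ih =>
    exact (ih.trans h).cast (by ring) (by rw [← succ_nsmul]) (by simp)

theorem Wk.addSm {p q : Cfg} {n k N : ℕ} {g v : Vec 2} {S S0 : Finset Cfg} (h : Wk E p q n g S)
    (hv : Sm (Cyc E N S0) k v) (hS : S0 ⊆ S) :
    ∃ n' S', n' ≤ n + k * N ∧ Wk E p q n' (g + v) S' ∧ S ⊆ S' := by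
  obtain ⟨C, hC, hk, rfl⟩ := hv
  suffices ∃ n' S', n' ≤ n + C.card * N ∧ Wk E p q n' (g + C.sum) S' ∧ S ⊆ S' by
    obtain ⟨n', S', h1, h2⟩ := this
    exact ⟨n', S', h1.trans (by gcongr), h2⟩
  clear hk
  induction C using Multiset.induction with
  | empty => exact ⟨n, S, by simp, by simpa using h, by simp⟩
  | cons a s ih =>
    obtain ⟨n', S', h1, h2, h3⟩ := ih fun c hc => hC c (by simp [hc])
    obtain ⟨r, hr, l, S'', hl, w⟩ := hC a (by simp)
    refine ⟨n' + l, S' ∪ S'', ?_, (h2.insert_cycle (h3 (hS hr)) w).cast rfl ?_ rfl,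
      h3.trans Finset.subset_union_left⟩
    · rw [Multiset.card_cons, add_mul]; omega
    · rw [Multiset.sum_cons]; abel

def fl (x : ℕ) := fM3 (x*x) * x + (fx (x*x)*(x*x) + fk (x*x) (x*x*x) * x)
def fP (x : ℕ) := (x*x + fe (x*x) (x*x*x) * x) + (fl x + fl x)

def Scheme (E : Cfg → Vec 2 → Cfg → Prop) (p q : Cfg) (s : Vec 2) (P : ℕ) : Prop :=
  ∃ σ, Sg σ ∧ ∃ r1 r2 a0 a1 a2 l1 l2 g0 g1 g2 b1 b2, ∃ k1 k2 : ℕ,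
    W E p r1 a0 g0 ∧ W E r1 r1 l1 b1 ∧ W E r1 r2 a1 g1 ∧ W E r2 r2 l2 b2 ∧ W E r2 q a2 g2 ∧
    s = g0 + k1 • b1 + g1 + k2 • b2 + g2 ∧ Qd σ b1 ∧ Qd σ b2 ∧ a0 + a1 + a2 + l1 + l2 ≤ P

theorem good_walk {p q : Cfg} {n0 x : ℕ} {g0 b : Vec 2} {S F : Finset Cfg}
    (hFx : F.card ≤ x) (h : Wk E p q n0 g0 S) (hn0 : n0 ≤ x * x)
    (H : p = q ∨ ∃ i, ∀ r l c S', Wk E r r l c S' → c i = 0)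
    (hb : Good (Cyc E F.card S) g0 (fM3 (x*x)) (fx (x*x)) (fk (x*x) (x*x*x)) b) :
    ∃ r ∈ S, ∃ l, l ≤ fl x ∧ W E r r l b := by
  rcases hb with rfl | ⟨c, ⟨r, hr, l, S', hl, w⟩, a, ha, rfl⟩ | ⟨⟨d, c, hc, ⟨k, hd⟩, hcr⟩, y, v, hy1, hyx,
    hv, rfl⟩
  · exact ⟨p, h.head_mem, 0, by simp, _, Wk.nil p⟩
  · rcases a with _ | a
    · exact ⟨r, hr, 0, by simp, _, (Wk.nil r).cast rfl (by simp) rfl⟩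
    · refine ⟨r, hr, _, ?_, S', w.repeat a⟩
      have := Nat.mul_le_mul ha (hl.trans hFx)
      unfold fl; omega
  · rcases H with rfl | ⟨i, hi⟩
    · obtain ⟨y, rfl⟩ : ∃ z, y = z + 1 := ⟨y - 1, by omega⟩
      obtain ⟨n', S', h1, h2, h3⟩ := (h.repeat y).addSm hv (le_refl S)
      refine ⟨p, h.head_mem, n', ?_, S', h2⟩
      have e1 := Nat.mul_le_mul hyx hn0
      have e2 := Nat.mul_le_mul_left (fk (x*x) (x*x*x)) hFx
      unfold fl; omega
    · exfalso; apply hcr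
      have hz : ∀ c ∈ Cyc E F.card S, c i = 0 := by
        rintro c ⟨r, -, l, S', -, w⟩
        exact hi r l c S' w
      have hdi : d i = 0 := by
        obtain ⟨C, hC, -, rfl⟩ := hd
        change evHom i C.sum = 0
        rw [map_multiset_sum]
        apply Multiset.sum_eq_zero
        intro z hz'
        obtain ⟨c, hc, rfl⟩ := Multiset.mem_map.1 hz'
        exact hz c (hC c hc)
      have hci := hz c hc
      unfold cr
      fin_cases i <;> simp at hdi hci <;> rw [hdi, hci] <;> ring

theorem core {p q : Cfg} {n m x : ℕ} {s : Vec 2} {S F : Finset Cfg} (hx : 1 ≤ x)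
    (hE : ∀ p g r, E p g r → p ∈ F ∧ r ∈ F)
    (hm : ∀ p g r, E p g r → ∀ i, |g i| ≤ (m : ℤ)) (hFx : F.card ≤ x) (hmx : m ≤ x)
    (h : Wk E p q n s S) (hp : p ∈ F)
    (H : p = q ∨ ∃ i, ∀ r l c S', Wk E r r l c S' → c i = 0) :
    Scheme E p q s (fP x) := by
  obtain ⟨n0, g0, C, w0, hn0, hC, rfl⟩ := h.decomp hE hp
  have hn0x : n0 ≤ x * x := hn0.trans (Nat.mul_le_mul hFx hFx)
  have hX : ∀ c ∈ Cyc E F.card S, Bd (x*x) c := by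
    rintro c ⟨r, -, l, S', hl, w⟩ i
    refine (w.bound hm i).trans ?_
    have := Nat.mul_le_mul (hl.trans hFx) hmx
    exact_mod_cast this
  have ht : Bd (x*x*x) g0 := by
    intro i
    refine (w0.bound hm i).trans ?_
    have := Nat.mul_le_mul hn0x hmx
    exact_mod_cast this
  obtain ⟨σ, hσ, e, b1, b2, k1, k2, he, hs, q1, q2, good1, good2⟩ :=
    vecmain (Nat.mul_pos hx hx) hX ht C hC
  obtain ⟨r1, hr1, l1, hl1, w1⟩ := good_walk hFx w0 hn0x H good1
  obtain ⟨r2, hr2, l2, hl2, w2⟩ := good_walk hFx w0 hn0x H good2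
  obtain ⟨n', S', hn', w', hSS⟩ := w0.addSm he (le_refl S)
  have hlen : n' + l1 + l2 ≤ fP x := by
    have e2 := Nat.mul_le_mul_left (fe (x*x) (x*x*x)) hFx
    unfold fP; omega
  obtain ⟨n1, n2, h1, h2, S1, S2, u1, u2, rfl, hg, rfl⟩ := w'.split (hSS hr1)
  rcases Finset.mem_union.1 (hSS hr2) with hr | hr
  · obtain ⟨n3, n4, h3, h4, S3, S4, u3, u4, rfl, rfl, rfl⟩ := u1.split hr
    refine ⟨σ, hσ, r2, r1, n3, n4, n2, l2, l1, h3, h4, h2, b2, b1, k2, k1, ⟨_, u3⟩, w2, ⟨_, u4⟩, w1,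
      ⟨_, u2⟩, ?_, q2, q1, by omega⟩
    have : g0 + C.sum = (g0 + e) + k1 • b1 + k2 • b2 := by rw [hs]; abel
    rw [this, hg]; abel
  · obtain ⟨n3, n4, h3, h4, S3, S4, u3, u4, rfl, rfl, rfl⟩ := u2.split hr
    refine ⟨σ, hσ, r1, r2, n1, n3, n4, l1, l2, h1, h3, h4, b1, b2, k1, k2, ⟨_, u1⟩, w1, ⟨_, u3⟩, w2,
      ⟨_, u4⟩, ?_, q1, q2, by omega⟩
    have : g0 + C.sum = (g0 + e) + k1 • b1 + k2 • b2 := by rw [hs]; abel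
    rw [this, hg]; abel

/-! ### runs -/

variable {T : Finset (Trans 2)} {A : Set (Vec 2)}

theorem disp_nil' : disp ([] : List (Trans 2)) = 0 := rfl
theorem disp_cons' (t : Trans 2) (π : List (Trans 2)) : disp (t :: π) = t.2.1 + disp π := by
  simp [disp]
theorem disp_append' (π π' : List (Trans 2)) : disp (π ++ π') = disp π + disp π' := by
  simp [disp]

theorem run_nil_iff {p q : ℕ} {u v : Vec 2} : Run T A p u q v [] ↔ p = q ∧ u ∈ A ∧ v = u := by
  constructor
  · rintro ⟨-, h1, h2, h3, -⟩
    exact ⟨h1, h2, by rw [h3, disp_nil', add_zero]⟩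
  · rintro ⟨h1, h2, h3⟩
    refine ⟨by simp, h1, h2, by rw [h3, disp_nil', add_zero], ?_⟩
    intro i h1 h2; simp at h2; omega

theorem run_cons_iff {p q : ℕ} {u v : Vec 2} {t : Trans 2} {π : List (Trans 2)} :
    Run T A p u q v (t :: π) ↔ t ∈ T ∧ t.1 = p ∧ u ∈ A ∧ Run T A t.2.2 (u + t.2.1) q v π := by
  constructor
  · rintro ⟨h1, ⟨h2, h2'⟩, h3, h4, h5⟩
    refine ⟨h1 t (by simp), h2, h3, fun s hs => h1 s (by simp [hs]), h2', ?_, ?_, ?_⟩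
    · have := h5 1 le_rfl (by simp)
      simpa [disp_cons', disp_nil'] using this
    · rw [h4, disp_cons', add_assoc]
    · intro i hi1 hi2
      have := h5 (i+1) (by omega) (by simp; omega)
      rw [List.take_succ_cons, disp_cons', ← add_assoc] at this
      exact this
  · rintro ⟨h1, h2, h3, h4, h5, h6, h7, h8⟩
    refine ⟨?_, ⟨h2, h5⟩, h3, ?_, ?_⟩
    · intro s hs
      rcases List.mem_cons.1 hs with rfl | hs
      · exact h1
      · exact h4 s hs
    · rw [h7, disp_cons', add_assoc]
    · intro i hi1 hi2
      obtain ⟨j, rfl⟩ : ∃ j, i = j + 1 := ⟨i - 1, by omega⟩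
      rw [List.take_succ_cons, disp_cons', ← add_assoc]
      rcases Nat.eq_zero_or_pos j with rfl | hj
      · simpa [disp_nil'] using h6
      · exact h8 j hj (by simpa using hi2)

theorem run_append {p q r : ℕ} {u v w : Vec 2} {π π' : List (Trans 2)}
    (h : Run T A p u q v π) (h' : Run T A q v r w π') : Run T A p u r w (π ++ π') := by
  induction π generalizing p u with
  | nil =>
    obtain ⟨rfl, -, rfl⟩ := run_nil_iff.1 h
    exact h'
  | cons t π ih =>
    obtain ⟨h1, h2, h3, h4⟩ := run_cons_iff.1 h
    exact run_cons_iff.2 ⟨h1, h2, h3, ih h4⟩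

inductive PS (T : Finset (Trans 2)) : ℕ → ℕ → Cfg → Cfg → Prop
  | nil (c : Cfg) : c.2 ∈ NatSet 2 → PS T 0 0 c c
  | step {p q : ℕ} {z u : Vec 2} {k n : ℕ} {c' : Cfg} : (p, z, q) ∈ T → u ∈ NatSet 2 →
      PS T k n (q, u + z) c' → PS T k (n+1) (p, u) c'
  | star {p : ℕ} {u u' : Vec 2} {k n : ℕ} {c' : Cfg} (β : List (Trans 2)) (j : ℕ) : β ≠ [] →
      (∀ t ∈ β, t ∈ T) → IsPathFrom p p β →
      Run T (NatSet 2) p u p u' (List.replicate j β).flatten →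
      PS T k n (p, u') c' → PS T (k+1) (n + β.length) (p, u) c'

theorem PS.trans {k k' n n' : ℕ} {c c' c'' : Cfg} (h : PS T k n c c') (h' : PS T k' n' c' c'') :
    PS T (k + k') (n + n') c c'' := by
  induction h with
  | nil c _ => simpa using h'
  | step ht hu _ ih =>
    have := PS.step ht hu (ih h')
    rwa [add_right_comm] at this
  | star β j h1 h2 h3 h4 _ ih =>
    have := PS.star β j h1 h2 h3 h4 (ih h')
    have e1 : ∀ a b c : ℕ, a + b + c = a + c + b := fun a b c => by omega
    rw [e1 _ 1, e1 _ β.length]; exact this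

theorem PS.of_run {p q : ℕ} {u v : Vec 2} {π : List (Trans 2)}
    (h : Run T (NatSet 2) p u q v π) : PS T 0 π.length (p, u) (q, v) := by
  induction π generalizing p u with
  | nil =>
    obtain ⟨rfl, h, rfl⟩ := run_nil_iff.1 h
    exact PS.nil _ h
  | cons t π ih =>
    obtain ⟨h1, rfl, h3, h4⟩ := run_cons_iff.1 h
    exact PS.step h1 h3 (ih h4)

def PSl (T : Finset (Trans 2)) (k n : ℕ) (c c' : Cfg) : Prop := ∃ k' ≤ k, ∃ n' ≤ n, PS T k' n' c c'

theorem PSl.trans {k k' n n' : ℕ} {c c' c'' : Cfg} (h : PSl T k n c c') (h' : PSl T k' n' c' c'') :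
    PSl T (k + k') (n + n') c c'' := by
  obtain ⟨a, ha, b, hb, h⟩ := h
  obtain ⟨a', ha', b', hb', h'⟩ := h'
  exact ⟨a + a', by omega, b + b', by omega, h.trans h'⟩

theorem PSl.mono {k k' n n' : ℕ} {c c' : Cfg} (h : PSl T k n c c') (hk : k ≤ k') (hn : n ≤ n') :
    PSl T k' n' c c' := by
  obtain ⟨a, ha, b, hb, h⟩ := h
  exact ⟨a, by omega, b, by omega, h⟩

theorem PS.l {k n : ℕ} {c c' : Cfg} (h : PS T k n c c') : PSl T k n c c' := ⟨k, le_rfl, n, le_rfl, h⟩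

/-- extraction of a linear path scheme -/
theorem PS.lps {k n : ℕ} {c c' : Cfg} (h : PS T k n c c') : ∃ ρ : LPS 2, ∃ e : List ℕ,
    IsLPSFrom T c.1 c'.1 ρ ∧ lpsLen ρ = n ∧ numCycles ρ = k ∧ e.length = k ∧
    Run T (NatSet 2) c.1 c.2 c'.1 c'.2 (lpsWord ρ e) := by
  induction h with
  | nil c hc =>
    refine ⟨([], []), [], ⟨by simp [lpsSupport], by simp [lpsSupport, IsPathFrom], by simp⟩,
      by simp [lpsLen, lpsSupport], rfl, rfl, ?_⟩
    exact run_nil_iff.2 ⟨rfl, hc, rfl⟩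
  | @step p q z u k n c' ht hu _ ih =>
    obtain ⟨⟨α, l⟩, e, ⟨h1, h2, h3⟩, h4, h5, h6, h7⟩ := ih
    refine ⟨((p, z, q) :: α, l), e, ⟨?_, ?_, h3⟩, ?_, h5, h6, ?_⟩
    · intro t htt
      rcases List.mem_cons.1 htt with rfl | htt
      · exact ht
      · exact h1 t htt
    · exact ⟨rfl, h2⟩
    · rw [← h4]; simp [lpsLen, lpsSupport]
    · exact run_cons_iff.2 ⟨ht, rfl, hu, h7⟩
  | @star p u u' k n c' β j hβ hT hP hr _ ih =>
    obtain ⟨⟨α, l⟩, e, ⟨h1, h2, h3⟩, h4, h5, h6, h7⟩ := ih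
    have hsup : lpsSupport (([], (β, α) :: l) : LPS 2) = β ++ lpsSupport ((α, l) : LPS 2) := by
      simp [lpsSupport]
    refine ⟨([], (β, α) :: l), j :: e, ⟨?_, ?_, ?_⟩, ?_, ?_, ?_, ?_⟩
    · intro t ht
      rw [hsup] at ht
      rcases List.mem_append.1 ht with h | h
      · exact hT t h
      · exact h1 t h
    · rw [hsup]
      have key : ∀ (π : List (Trans 2)) (a : ℕ), IsPathFrom a p π →
          IsPathFrom a c'.1 (π ++ lpsSupport ((α, l) : LPS 2)) := by
        intro π
        induction π with
        | nil => intro a ha; change a = p at ha; subst ha; exact h2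
        | cons t π ih => intro a ha; exact ⟨ha.1, ih _ ha.2⟩
      exact key β p hP
    · intro s hs
      rcases List.mem_cons.1 hs with rfl | hs
      · exact ⟨hβ, p, hP⟩
      · exact h3 s hs
    · unfold lpsLen at h4 ⊢
      rw [hsup, List.length_append, h4]; omega
    · simpa [numCycles] using h5
    · simp [h6]
    · have : lpsWord (([], (β, α) :: l) : LPS 2) (j :: e) =
          (List.replicate j β).flatten ++ lpsWord ((α, l) : LPS 2) e := by
        simp [lpsWord]
      rw [this]
      exact run_append hr h7

end

section

noncomputable def FF (Q : Finset ℕ) (D : ℕ) : Finset Cfg :=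
  Q ×ˢ Fintype.piFinset (fun _ : Fin 2 => Finset.Ico (0:ℤ) D)

theorem FF_card (Q : Finset ℕ) (D : ℕ) : (FF Q D).card = Q.card * (D * D) := by
  simp [FF, Finset.card_product, pow_two]

theorem mem_FF {Q : Finset ℕ} {D : ℕ} {c : Cfg} :
    c ∈ FF Q D ↔ c.1 ∈ Q ∧ ∀ i, 0 ≤ c.2 i ∧ c.2 i < D := by
  simp only [FF, Finset.mem_product, Fintype.mem_piFinset, Finset.mem_Ico]

def GE (T : Finset (Trans 2)) (Q : Finset ℕ) (J : Finset (Fin 2)) (D : ℕ) (c : Cfg) (z : Vec 2)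
    (c' : Cfg) : Prop :=
  (c.1, z, c'.1) ∈ T ∧ c ∈ FF Q D ∧ c' ∈ FF Q D ∧ (∀ j ∈ J, c'.2 j = c.2 j + z j) ∧
    ∀ j, j ∉ J → c.2 j = 0 ∧ c'.2 j = 0

variable {T : Finset (Trans 2)} {Q : Finset ℕ} {J : Finset (Fin 2)} {D m : ℕ}

theorem GE.pin {c c' : Cfg} {n : ℕ} {g : Vec 2} {S : Finset Cfg}
    (h : Wk (GE T Q J D) c c' n g S) : ∀ j ∈ J, c'.2 j = c.2 j + g j := by
  induction h with
  | nil p => simp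
  | cons e _ ih =>
    intro j hj
    rw [ih j hj, e.2.2.2.1 j hj, Pi.add_apply]; ring

theorem GE.memr {c c' : Cfg} {n : ℕ} {g : Vec 2} {S : Finset Cfg}
    (h : Wk (GE T Q J D) c c' n g S) (hc : c ∈ FF Q D) : c' ∈ FF Q D := by
  induction h with
  | nil p => exact hc
  | cons e _ ih => exact ih e.2.2.1

theorem GE.lift (hm : ∀ t ∈ T, ∀ i, |t.2.1 i| ≤ (m : ℤ)) {c c' : Cfg} {n : ℕ} {g : Vec 2}
    {S : Finset Cfg} (h : Wk (GE T Q J D) c c' n g S) (hc : c ∈ FF Q D) :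
    ∃ π : List (Trans 2), π.length = n ∧ (∀ t ∈ π, t ∈ T) ∧ IsPathFrom c.1 c'.1 π ∧
      ∀ u : Vec 2, (∀ j ∈ J, u j = c.2 j) → (∀ j, j ∉ J → ((n * m : ℕ) : ℤ) ≤ u j) →
        Run T (NatSet 2) c.1 u c'.1 (u + g) π := by
  induction h with
  | nil p =>
    refine ⟨[], rfl, by simp, rfl, fun u hu hu' => run_nil_iff.2 ⟨rfl, ?_, by simp⟩⟩
    intro i
    by_cases hi : i ∈ J
    · rw [hu i hi]; exact ((mem_FF.1 hc).2 i).1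
    · simpa using hu' i hi
  | @cons p r q n g g' S e w ih =>
    obtain ⟨π, h1, h2, h3, h4⟩ := ih e.2.2.1
    refine ⟨(p.1, g, r.1) :: π, by simp [h1], ?_, ⟨rfl, h3⟩, fun u hu hu' => ?_⟩
    · intro t ht
      rcases List.mem_cons.1 ht with rfl | ht
      · exact e.1
      · exact h2 t ht
    · refine run_cons_iff.2 ⟨e.1, rfl, ?_, ?_⟩
      · intro i
        by_cases hi : i ∈ J
        · rw [hu i hi]; exact ((mem_FF.1 hc).2 i).1
        · exact le_trans (by positivity) (hu' i hi)
      · rw [← add_assoc]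
        refine h4 _ ?_ ?_
        · intro j hj
          rw [e.2.2.2.1 j hj, ← hu j hj]; rfl
        · intro j hj
          have a1 := hu' j hj
          have a2 := abs_le.1 (hm _ e.1 j)
          simp only at a2
          rw [Pi.add_apply]
          push_cast at a1 ⊢
          linarith

theorem GE.walk (hm : ∀ t ∈ T, ∀ i, |t.2.1 i| ≤ (m : ℤ)) {c c' : Cfg} {n : ℕ} {g : Vec 2}
    {S : Finset Cfg} (h : Wk (GE T Q J D) c c' n g S) (hc : c ∈ FF Q D) (u : Vec 2)
    (hu : ∀ j ∈ J, u j = c.2 j) (hu' : ∀ j, j ∉ J → ((n * m : ℕ) : ℤ) ≤ u j) :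
    PSl T 0 n (c.1, u) (c'.1, u + g) := by
  obtain ⟨π, h1, -, -, h4⟩ := GE.lift hm h hc
  rw [← h1]
  exact (PS.of_run (h4 u hu hu')).l

theorem GE.cycle (hm : ∀ t ∈ T, ∀ i, |t.2.1 i| ≤ (m : ℤ)) {c : Cfg} {n k N : ℕ} {g : Vec 2}
    {S : Finset Cfg} (h : Wk (GE T Q J D) c c n g S) (hc : c ∈ FF Q D) (u : Vec 2)
    (hu : ∀ j ∈ J, u j = c.2 j) (hu' : ∀ j, j ∉ J → ((n * m : ℕ) : ℤ) ≤ u j)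
    (hv' : ∀ j, j ∉ J → ((n * m : ℕ) : ℤ) ≤ u j + k * g j) (hN : g ≠ 0 → k ≤ N) :
    PSl T 1 n (c.1, u) (c.1, u + k • g) ∧ PSl T 0 (N * n) (c.1, u) (c.1, u + k • g) := by
  have hnat : u ∈ NatSet 2 := by
    intro i
    by_cases hi : i ∈ J
    · rw [hu i hi]; exact ((mem_FF.1 hc).2 i).1
    · exact le_trans (by positivity) (hu' i hi)
  by_cases hg : g = 0
  · subst hg
    rw [smul_zero, add_zero]
    exact ⟨(PS.nil _ hnat).l.mono (by simp) (by simp), (PS.nil _ hnat).l.mono (by simp) (by simp)⟩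
  have hn : n ≠ 0 := by
    rintro rfl
    cases h; exact hg rfl
  have hJ := GE.pin h
  obtain ⟨π, h1, h2, h3, h4⟩ := GE.lift hm h hc
  have key : ∀ k : ℕ, ∀ u : Vec 2, (∀ j ∈ J, u j = c.2 j) →
      (∀ j, j ∉ J → ((n * m : ℕ) : ℤ) ≤ u j) →
      (∀ j, j ∉ J → ((n * m : ℕ) : ℤ) ≤ u j + k * g j) → u ∈ NatSet 2 →
      Run T (NatSet 2) c.1 u c.1 (u + k • g) (List.replicate k π).flatten := by
    intro k
    induction k with
    | zero => intro u _ _ _ hu; exact run_nil_iff.2 ⟨rfl, hu, by simp⟩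
    | succ k ih =>
      intro u hu hu' hv' hnat
      rw [List.replicate_succ, List.flatten_cons]
      have r := h4 u hu hu'
      have e : u + (k+1) • g = (u + g) + k • g := by rw [succ_nsmul]; abel
      rw [e]
      have a1 : ∀ j ∈ J, (u + g) j = c.2 j := by
        intro j hj
        rw [Pi.add_apply, hu j hj]; linarith [hJ j hj]
      have a2 : ∀ j, j ∉ J → ((n * m : ℕ) : ℤ) ≤ (u + g) j := by
        intro j hj
        have b1 := hu' j hj
        have b2 := hv' j hj
        rw [Pi.add_apply]
        rcases le_or_gt 0 (g j) with h | h
        · linarith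
        · have : (k:ℤ) * g j ≤ 0 := mul_nonpos_of_nonneg_of_nonpos (by positivity) h.le
          push_cast at b2 ⊢; push_cast at b1
          linarith
      refine run_append r (ih _ a1 a2 ?_ ?_)
      · intro j hj
        have b2 := hv' j hj
        rw [Pi.add_apply]; push_cast at b2 ⊢; linarith
      · intro i
        by_cases hi : i ∈ J
        · rw [a1 i hi]; exact ((mem_FF.1 hc).2 i).1
        · exact le_trans (by positivity) (a2 i hi)
  have r := key k u hu hu' hv' hnat
  have hπ : π ≠ [] := by rintro rfl; simp at h1; exact hn h1.symm
  constructor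
  · have hend : u + k • g ∈ NatSet 2 := by
      intro i
      rw [Pi.add_apply, nsa]
      by_cases hi : i ∈ J
      · have : g i = 0 := by linarith [hJ i hi]
        rw [hu i hi, this, mul_zero, add_zero]; exact ((mem_FF.1 hc).2 i).1
      · exact le_trans (by positivity) (hv' i hi)
    have := (PS.star π k hπ h2 h3 r (PS.nil (c.1, u + k • g) hend)).l
    rw [h1] at this
    exact this.mono (by simp) (by simp)
  · have := (PS.of_run r).l
    refine this.mono le_rfl ?_
    simp [h1]
    exact Nat.mul_le_mul_right _ (hN hg)

theorem GE.seg (hm : ∀ t ∈ T, ∀ i, |t.2.1 i| ≤ (m : ℤ)) {c c' : Cfg} {P K : ℕ} {s : Vec 2}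
    (h : Scheme (GE T Q J D) c c' s P) (hc : c ∈ FF Q D) (u : Vec 2)
    (hu : ∀ j ∈ J, u j = c.2 j) (hu' : ∀ j, j ∉ J → ((2 * (P * m) : ℕ) : ℤ) ≤ u j)
    (hv' : ∀ j, j ∉ J → ((2 * (P * m) : ℕ) : ℤ) ≤ u j + s j) (hK : ∀ j, |s j| ≤ (K : ℤ)) :
    PSl T 2 P (c.1, u) (c'.1, u + s) ∧
    PSl T 0 (P + 2 * (K + P * m) * P) (c.1, u) (c'.1, u + s) := by
  have hmE : ∀ p g r, GE T Q J D p g r → ∀ i, |g i| ≤ (m : ℤ) := fun p g r e i => hm _ e.1 i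
  obtain ⟨σ, hσ, r1, r2, a0, a1, a2, l1, l2, g0, g1, g2, b1, b2, k1, k2, ⟨_, w0⟩, ⟨_, v1⟩, ⟨_, w1⟩,
    ⟨_, v2⟩, ⟨_, w2⟩, rfl, q1, q2, hP⟩ := h
  have hr1 := GE.memr w0 hc
  have hr2 := GE.memr w1 hr1
  have B0 := fun i => abs_le.1 (w0.bound hmE i)
  have B1 := fun i => abs_le.1 (w1.bound hmE i)
  have B2 := fun i => abs_le.1 (w2.bound hmE i)
  have C1 := GE.pin v1
  have C2 := GE.pin v2
  have hPm : (a0:ℤ)*m + a1*m+a2*m+l1*m+l2*m ≤ P*m := by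
    have := Nat.mul_le_mul_right m hP
    rw [← Nat.cast_le (α := ℤ)] at this
    push_cast at this
    linarith
  have pa0 : 0 ≤ (a0:ℤ)*m := by positivity
  have pa1 : 0 ≤ (a1:ℤ)*m := by positivity
  have pa2 : 0 ≤ (a2:ℤ)*m := by positivity
  have pl1 : 0 ≤ (l1:ℤ)*m := by positivity
  have pl2 : 0 ≤ (l2:ℤ)*m := by positivity
  push_cast at B0 B1 B2 hu' hv'
  -- bound on the number of repetitions
  have hk : (k1:ℤ) * hh σ b1 + k2 * hh σ b2 ≤ (2 * (K + P*m) : ℕ) := by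
    have e : (k1:ℤ) * hh σ b1 + k2 * hh σ b2 =
        hh σ ((g0 + k1 • b1 + g1 + k2 • b2 + g2) - (g0 + g1 + g2)) := by
      simp only [hh, Pi.add_apply, Pi.sub_apply, nsa]; ring
    rw [e]
    apply hh_bound hσ
    intro i
    have e1 := abs_le.1 (hK i)
    have := B0 i; have := B1 i; have := B2 i
    rw [Pi.sub_apply, abs_le]
    set s := (g0 + k1 • b1 + g1 + k2 • b2 + g2) i
    simp only [Pi.add_apply]
    push_cast
    constructor <;> linarith
  have n1 : b1 ≠ 0 → k1 ≤ 2 * (K + P*m) := by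
    intro hb
    have e1 := hh_pos hσ q1 hb
    have e2 : 0 ≤ (k2:ℤ) * hh σ b2 := mul_nonneg (by positivity) (hh_nonneg q2)
    have e3 : (k1:ℤ) * 1 ≤ k1 * hh σ b1 := mul_le_mul_of_nonneg_left e1 (by positivity)
    have : (k1:ℤ) ≤ (2 * (K + P*m) : ℕ) := by linarith
    exact_mod_cast this
  have n2 : b2 ≠ 0 → k2 ≤ 2 * (K + P*m) := by
    intro hb
    have e1 := hh_pos hσ q2 hb
    have e2 : 0 ≤ (k1:ℤ) * hh σ b1 := mul_nonneg (by positivity) (hh_nonneg q1)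
    have e3 : (k2:ℤ) * 1 ≤ k2 * hh σ b2 := mul_le_mul_of_nonneg_left e1 (by positivity)
    have : (k2:ℤ) ≤ (2 * (K + P*m) : ℕ) := by linarith
    exact_mod_cast this
  -- signs
  have sgn : ∀ j, (0 ≤ (k1:ℤ) * b1 j ∧ 0 ≤ (k2:ℤ) * b2 j) ∨ ((k1:ℤ) * b1 j ≤ 0 ∧ (k2:ℤ) * b2 j ≤ 0) := by
    intro j
    have e1 := q1 j; have e2 := q2 j
    rcases hσ j with h | h <;> rw [h] at e1 e2
    · left; constructor <;> apply mul_nonneg <;> first | positivity | linarith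
    · right; constructor <;> apply mul_nonpos_of_nonneg_of_nonpos <;> first | positivity | linarith
  simp only [Pi.add_apply, nsa] at hv'
  have z0 := GE.pin w0
  have z1 := GE.pin w1
  have s0 := GE.walk hm w0 hc u hu (by
    intro j hj; have := hu' j hj; push_cast; linarith)
  have s1 := GE.cycle (k := k1) hm v1 hr1 (u + g0) (by
      intro j hj; rw [Pi.add_apply, hu j hj, z0 j hj]) (by
      intro j hj; have := hu' j hj; have := B0 j; push_cast; rw [Pi.add_apply]; linarith) (by
      intro j hj; have := hu' j hj; have := hv' j hj
      have := B0 j; have := B1 j; have := B2 j; push_cast; rw [Pi.add_apply]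
      rcases sgn j with ⟨_, _⟩ | ⟨_, _⟩ <;> linarith) n1
  have s2 := GE.walk hm w1 hr1 (u + g0 + k1 • b1) (by
      intro j hj; have := C1 j hj
      have e : b1 j = 0 := by linarith
      simp only [Pi.add_apply, nsa, e]; rw [hu j hj, z0 j hj]; ring) (by
      intro j hj; have := hu' j hj; have := hv' j hj
      have := B0 j; have := B1 j; have := B2 j; push_cast; simp only [Pi.add_apply, nsa]
      rcases sgn j with ⟨_, _⟩ | ⟨_, _⟩ <;> linarith)
  have s3 := GE.cycle (k := k2) hm v2 hr2 (u + g0 + k1 • b1 + g1) (by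
      intro j hj; have := C1 j hj
      have e : b1 j = 0 := by linarith
      simp only [Pi.add_apply, nsa, e]; rw [hu j hj, z1 j hj, z0 j hj]; ring) (by
      intro j hj; have := hu' j hj; have := hv' j hj
      have := B0 j; have := B1 j; have := B2 j; push_cast; simp only [Pi.add_apply, nsa]
      rcases sgn j with ⟨_, _⟩ | ⟨_, _⟩ <;> linarith) (by
      intro j hj; have := hu' j hj; have := hv' j hj
      have := B0 j; have := B1 j; have := B2 j; push_cast; simp only [Pi.add_apply, nsa]
      rcases sgn j with ⟨_, _⟩ | ⟨_, _⟩ <;> linarith) n2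
  have s4 := GE.walk hm w2 hr2 (u + g0 + k1 • b1 + g1 + k2 • b2) (by
      intro j hj; have := C1 j hj; have := C2 j hj
      have e : b1 j = 0 := by linarith
      have e' : b2 j = 0 := by linarith
      simp only [Pi.add_apply, nsa, e, e']; rw [hu j hj, z1 j hj, z0 j hj]; ring) (by
      intro j hj; have := hu' j hj; have := hv' j hj
      have := B0 j; have := B1 j; have := B2 j; push_cast; simp only [Pi.add_apply, nsa]
      rcases sgn j with ⟨_, _⟩ | ⟨_, _⟩ <;> linarith)
  have e : u + (g0 + k1 • b1 + g1 + k2 • b2 + g2) = u + g0 + k1 • b1 + g1 + k2 • b2 + g2 := by abel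
  rw [e]
  constructor
  · exact ((((s0.trans s1.1).trans s2).trans s3.1).trans s4).mono (by omega) (by omega)
  · refine ((((s0.trans s1.2).trans s2).trans s3.2).trans s4).mono (by omega) ?_
    have := Nat.mul_le_mul_left (2 * (K + P*m)) (show l1 + l2 ≤ P by omega)
    rw [mul_add] at this
    omega

end

section

open Relation

def Stp (T : Finset (Trans 2)) (c c' : Cfg) : Prop :=
  ∃ z, (c.1, z, c'.1) ∈ T ∧ c.2 ∈ NatSet 2 ∧ c'.2 ∈ NatSet 2 ∧ c'.2 = c.2 + z

def StA (T : Finset (Trans 2)) (A : Set Cfg) (c c' : Cfg) : Prop := Stp T c c' ∧ c ∈ A ∧ c' ∈ A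

def Al (Q : Finset ℕ) : Set Cfg := {c | c.1 ∈ Q ∧ c.2 ∈ NatSet 2}

variable {T : Finset (Trans 2)} {Q : Finset ℕ} {m : ℕ}

theorem Stp.ps {c c' : Cfg} (h : Stp T c c') : PSl T 0 1 c c' := by
  obtain ⟨z, h1, h2, h3, h4⟩ := h
  obtain ⟨p, u⟩ := c
  obtain ⟨q, v⟩ := c'
  simp only at h1 h2 h3 h4
  subst h4
  exact (PS.step h1 h2 (PS.nil _ h3)).l

theorem Stp.bd (hm : ∀ t ∈ T, ∀ i, |t.2.1 i| ≤ (m : ℤ)) {c c' : Cfg} (h : Stp T c c') (i : Fin 2) :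
    c'.2 i ≤ c.2 i + m ∧ c.2 i ≤ c'.2 i + m := by
  obtain ⟨z, h1, h2, h3, h4⟩ := h
  have := abs_le.1 (hm _ h1 i)
  simp only at this
  rw [h4, Pi.add_apply]
  constructor <;> linarith

theorem ps_refl {c : Cfg} (h : c.2 ∈ NatSet 2) : PSl T 0 0 c c := (PS.nil c h).l

noncomputable def pj (J : Finset (Fin 2)) (c : Cfg) : Cfg := (c.1, fun j => if j ∈ J then c.2 j else 0)

theorem pj_mem {J : Finset (Fin 2)} {D : ℕ} (hD : 1 ≤ D) {c : Cfg} (hc : c ∈ Al Q)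
    (h : ∀ j ∈ J, c.2 j < D) : pj J c ∈ FF Q D := by
  refine mem_FF.2 ⟨hc.1, fun i => ?_⟩
  by_cases hi : i ∈ J
  · simp only [pj, hi, if_true]; exact ⟨hc.2 i, h i hi⟩
  · simp only [pj, hi, if_false]; exact ⟨le_rfl, by exact_mod_cast hD⟩

theorem to_walk {J : Finset (Fin 2)} {D : ℕ} (hD : 1 ≤ D) {A : Set Cfg}
    (hA : ∀ c ∈ A, c ∈ Al Q ∧ ∀ j ∈ J, c.2 j < D) {c c' : Cfg}
    (h : ReflTransGen (StA T A) c c') :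
    ∃ n S, Wk (GE T Q J D) (pj J c) (pj J c') n (c'.2 - c.2) S := by
  induction h using ReflTransGen.head_induction_on with
  | refl => exact ⟨0, _, (Wk.nil _).cast rfl (by simp) rfl⟩
  | @head a b hab _ ih =>
    obtain ⟨n, S, w⟩ := ih
    obtain ⟨⟨z, h1, h2, h3, h4⟩, ha, hb⟩ := hab
    have e : GE T Q J D (pj J a) z (pj J b) := by
      refine ⟨h1, pj_mem hD (hA _ ha).1 (hA _ ha).2, pj_mem hD (hA _ hb).1 (hA _ hb).2, ?_, ?_⟩
      · intro j hj
        simp only [pj, hj, if_true]; rw [h4]; rfl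
      · intro j hj
        simp only [pj, hj, if_false]; simp
    exact ⟨n+1, _, (Wk.cons e w).cast rfl (by rw [h4]; abel) rfl⟩

theorem segJ (hm : ∀ t ∈ T, ∀ i, |t.2.1 i| ≤ (m : ℤ)) {J : Finset (Fin 2)} {D x K : ℕ} (hD : 1 ≤ D)
    {A : Set Cfg} (hA : ∀ c ∈ A, c ∈ Al Q ∧ ∀ j ∈ J, c.2 j < D) {c c' : Cfg} (hc : c ∈ A)
    (h : ReflTransGen (StA T A) c c') (hx : 1 ≤ x) (hQ : Q.card * (D * D) ≤ x) (hmx : m ≤ x)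
    (hJ : pj J c = pj J c' ∨ J.Nonempty) (hu : ∀ j, j ∉ J → ((2 * (fP x * m) : ℕ) : ℤ) ≤ c.2 j)
    (hv : ∀ j, j ∉ J → ((2 * (fP x * m) : ℕ) : ℤ) ≤ c'.2 j) (hK : ∀ j, |(c'.2 - c.2) j| ≤ (K:ℤ)) :
    PSl T 2 (fP x) c c' ∧ PSl T 0 (fP x + 2 * (K + fP x * m) * fP x) c c' := by
  obtain ⟨n, S, w⟩ := to_walk hD hA h
  have hp := pj_mem hD (hA _ hc).1 (hA _ hc).2
  have sch := core (m := m) hx (F := FF Q D) (fun p g r e => ⟨e.2.1, e.2.2.1⟩) (fun p g r e i => hm _ e.1 i)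
    (by rw [FF_card]; exact hQ) hmx w hp (by
      rcases hJ with h | ⟨i, hi⟩
      · exact Or.inl h
      · right
        refine ⟨i, fun r l c S' w => ?_⟩
        have := GE.pin w i hi
        linarith)
  have := GE.seg (K := K) hm sch hp c.2 (by intro j hj; simp [pj, hj]) hu (by
    intro j hj
    rw [Pi.sub_apply]
    linarith [hv j hj]) hK
  have e : c.2 + (c'.2 - c.2) = c'.2 := by abel
  rw [e] at this
  exact this

/-- shortening of hop sequences -/
theorem hops {R : Cfg → Cfg → Prop} {F : Finset Cfg} {N : ℕ} (hR : ∀ c c', R c c' → c ∈ F ∧ c' ∈ F)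
    (hN : ∀ c c', R c c' → PSl T 0 N c c') {c c' : Cfg} (hc : c ∈ F) (hc' : c.2 ∈ NatSet 2)
    (h : ReflTransGen R c c') : PSl T 0 (F.card * F.card * N) c c' := by
  let E : Cfg → Vec 2 → Cfg → Prop := fun a _ b => R a b
  have hw : ∃ n g S, Wk E c c' n g S := by
    clear hc hc'
    induction h using ReflTransGen.head_induction_on with
    | refl => exact ⟨_, _, _, Wk.nil _⟩
    | head hab _ ih =>
      obtain ⟨n, g, S, w⟩ := ih
      exact ⟨_, _, _, Wk.cons (g := 0) (show E _ 0 _ from hab) w⟩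
  obtain ⟨n, g, S, w⟩ := hw
  obtain ⟨n0, g0, C, w0, hn0, -, -⟩ := w.decomp (F := F) (fun p g r e => hR _ _ e) hc
  have key : ∀ {a b n g S}, Wk E a b n g S → ∀ (_ : b = c'), a.2 ∈ NatSet 2 → PSl T 0 (n * N) a b := by
    intro a b n g S w
    induction w with
    | nil p => intro _ h; exact (ps_refl h).mono le_rfl (by simp)
    | cons e w ih =>
      intro hb h
      have h1 := hN _ _ e
      have h2 : ∀ {k n c d}, PS T k n c d → d.2 ∈ NatSet 2 := by
        intro k n c d h
        induction h with
        | nil c h => exact h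
        | step _ _ _ ih => exact ih
        | star _ _ _ _ _ _ _ ih => exact ih
      obtain ⟨_, _, _, _, h3⟩ := hN _ _ e
      exact (h1.trans (ih hb (h2 h3))).mono (by simp) (by rw [add_mul]; omega)
  exact (key w0 rfl hc').mono le_rfl (Nat.mul_le_mul_right _ hn0)

end

section

open Relation

variable {T : Finset (Trans 2)} {Q : Finset ℕ} {m : ℕ}

def Bx (Q : Finset ℕ) (D1 : ℕ) : Set Cfg := {c | c ∈ Al Q ∧ ∀ i, c.2 i < D1}
def Ar (Q : Finset ℕ) (D D1 : ℕ) (i : Fin 2) : Set Cfg :=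
  {c | c ∈ Al Q ∧ c.2 i < D ∧ ∀ j, j ≠ i → (D1 : ℤ) ≤ c.2 j}
def Lo (Q : Finset ℕ) (D : ℕ) : Set Cfg := {c | c ∈ Al Q ∧ ∃ i, c.2 i < D}

theorem lo_cases {D D1 : ℕ} (h : D ≤ D1) {c : Cfg} (hc : c ∈ Lo Q D) :
    c ∈ Bx Q D1 ∨ ∃ i, c ∈ Ar Q D D1 i := by
  by_cases hb : ∀ i, c.2 i < D1
  · exact Or.inl ⟨hc.1, hb⟩
  · right
    push Not at hb
    obtain ⟨j, hj⟩ := hb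
    obtain ⟨hA, i, hi⟩ := hc
    refine ⟨i, hA, hi, fun k hk => ?_⟩
    have hji : j ≠ i := by
      rintro rfl
      have : (D:ℤ) ≤ D1 := by exact_mod_cast h
      linarith
    have : k = j := by omega
    rw [this]; exact hj

theorem arm_arm (hm : ∀ t ∈ T, ∀ i, |t.2.1 i| ≤ (m : ℤ)) {D D1 : ℕ} (h : D + m ≤ D1) {c c' : Cfg}
    {i j : Fin 2} (hc : c ∈ Ar Q D D1 i) (hc' : c' ∈ Ar Q D D1 j) (hs : Stp T c c') : i = j := by
  by_contra hij
  have h1 := hc.2.1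
  have h2 := hc'.2.2 i hij
  have h3 := hs.bd hm i
  have : (D:ℤ) + m ≤ D1 := by exact_mod_cast h
  linarith

def fN (x m D1 : ℕ) := 1 + (fP x + 2 * (D1 + m + fP x * m) * fP x) + 1

def fLL (q x m D1 : ℕ) := (fP x + 1) + (q*(D1*D1))*(q*(D1*D1)) * fN x m D1 + (1 + fP x)

theorem arm_seg (hm : ∀ t ∈ T, ∀ i, |t.2.1 i| ≤ (m : ℤ)) {D D1 x : ℕ} (hD : 1 ≤ D)
    (hx : 1 ≤ x) (hQ : Q.card * (D * D) ≤ x) (hmx : m ≤ x) (hD1 : 2 * (fP x * m) ≤ D1)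
    {i : Fin 2} {c c' : Cfg} (hc : c ∈ Ar Q D D1 i) (hc' : c' ∈ Ar Q D D1 i)
    (h : ReflTransGen (StA T (Ar Q D D1 i)) c c') :
    PSl T 2 (fP x) c c' ∧ ((∀ j, c.2 j ≤ D1 + m) → (∀ j, c'.2 j ≤ D1 + m) →
      PSl T 0 (fP x + 2 * (D1 + m + fP x * m) * fP x) c c') := by
  have hD1' : ((2 * (fP x * m) : ℕ) : ℤ) ≤ D1 := by exact_mod_cast hD1
  have key := fun K hK => segJ (J := {i}) (K := K) (x := x) hm hD (A := Ar Q D D1 i)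
    (by intro c hc; refine ⟨hc.1, fun j hj => ?_⟩; rw [Finset.mem_singleton.1 hj]; exact hc.2.1)
    hc h hx hQ hmx (Or.inr ⟨i, by simp⟩)
    (by intro j hj; exact hD1'.trans (hc.2.2 j (by simpa using hj)))
    (by intro j hj; exact hD1'.trans (hc'.2.2 j (by simpa using hj))) hK
  constructor
  · refine (key (((c'.2 - c.2) 0).natAbs + ((c'.2 - c.2) 1).natAbs) ?_).1
    intro j
    fin_cases j <;> simp
  · intro h1 h2
    refine (key (D1 + m) ?_).2
    intro j
    have := h1 j; have := h2 j
    have := hc.1.2 j; have := hc'.1.2 j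
    rw [Pi.sub_apply, abs_le]; push_cast
    constructor <;> linarith

theorem lo_run (hm : ∀ t ∈ T, ∀ i, |t.2.1 i| ≤ (m : ℤ)) {D D1 x : ℕ} (hD : 1 ≤ D)
    (hx : 1 ≤ x) (hQ : Q.card * (D * D) ≤ x) (hmx : m ≤ x) (hD1 : 2 * (fP x * m) ≤ D1)
    (hDD : D + m ≤ D1) {c c' : Cfg} (hc : c ∈ Lo Q D)
    (h : ReflTransGen (StA T (Lo Q D)) c c') :
    PSl T 4 (fLL Q.card x m D1) c c' := by
  let R : Cfg → Cfg → Prop := fun a b => a ∈ Bx Q D1 ∧ b ∈ Bx Q D1 ∧ PSl T 0 (fN x m D1) a b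
  have inv : (∃ i, c ∈ Ar Q D D1 i ∧ c' ∈ Ar Q D D1 i ∧ ReflTransGen (StA T (Ar Q D D1 i)) c c') ∨
      (c' ∈ Bx Q D1 ∧ ∃ b ∈ Bx Q D1, PSl T 2 (fP x + 1) c b ∧ ReflTransGen R b c') ∨
      (∃ i, ∃ b ∈ Bx Q D1, ∃ d ∈ Bx Q D1, ∃ e, PSl T 2 (fP x + 1) c b ∧ ReflTransGen R b d ∧
        Stp T d e ∧ e ∈ Ar Q D D1 i ∧ c' ∈ Ar Q D D1 i ∧
        ReflTransGen (StA T (Ar Q D D1 i)) e c') := by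
    induction h with
    | refl =>
      rcases lo_cases (D1 := D1) (by omega) hc with hb | ⟨i, hi⟩
      · exact Or.inr (Or.inl ⟨hb, c, hb, (ps_refl hb.1.2).mono (by simp) (by simp), ReflTransGen.refl⟩)
      · exact Or.inl ⟨i, hi, hi, ReflTransGen.refl⟩
    | @tail y z _ hyz ih =>
      have hz := lo_cases (D1 := D1) (by omega) hyz.2.2
      rcases ih with ⟨i, h1, h2, h3⟩ | ⟨h1, b, hb, h2, h3⟩ | ⟨i, b, hb, d, hd, e, h1, h2, h3, h4, h5, h6⟩
      · rcases hz with hz | ⟨j, hj⟩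
        · right; left
          refine ⟨hz, z, hz, ?_, ReflTransGen.refl⟩
          exact (arm_seg hm hD hx hQ hmx hD1 h1 h2 h3).1.trans hyz.1.ps
        · have := arm_arm hm hDD h2 hj hyz.1
          subst this
          exact Or.inl ⟨i, h1, hj, h3.tail ⟨hyz.1, h2, hj⟩⟩
      · rcases hz with hz | ⟨j, hj⟩
        · right; left
          refine ⟨hz, b, hb, h2, h3.tail ⟨h1, hz, hyz.1.ps.mono le_rfl ?_⟩⟩
          unfold fN; omega
        · right; right
          exact ⟨j, b, hb, y, h1, z, h2, h3, hyz.1, hj, hj, ReflTransGen.refl⟩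
      · rcases hz with hz | ⟨j, hj⟩
        · right; left
          refine ⟨hz, b, hb, h1, h2.tail ⟨hd, hz, ?_⟩⟩
          refine (h3.ps.trans ((arm_seg hm hD hx hQ hmx hD1 h4 h5 h6).2 ?_ ?_)).trans hyz.1.ps
          · intro j
            linarith [(h3.bd hm j).1, hd.2 j]
          · intro j
            linarith [(hyz.1.bd hm j).2, hz.2 j]
        · right; right
          have := arm_arm hm hDD h5 hj hyz.1
          subst this
          exact ⟨i, b, hb, d, hd, e, h1, h2, h3, h4, hj, h6.tail ⟨hyz.1, h5, hj⟩⟩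
  have bxF : ∀ a ∈ Bx Q D1, a ∈ FF Q D1 := fun a ha => mem_FF.2 ⟨ha.1.1, fun i => ⟨ha.1.2 i, ha.2 i⟩⟩
  have hop : ∀ {a b}, a ∈ Bx Q D1 → ReflTransGen R a b →
      PSl T 0 ((Q.card*(D1*D1))*(Q.card*(D1*D1)) * fN x m D1) a b := by
    intro a b ha h
    have := hops (T := T) (R := R) (F := FF Q D1) (fun c c' h => ⟨bxF _ h.1, bxF _ h.2.1⟩)
      (fun c c' h => h.2.2) (bxF _ ha) ha.1.2 h
    rwa [FF_card] at this
  rcases inv with ⟨i, h1, h2, h3⟩ | ⟨h1, b, hb, h2, h3⟩ | ⟨i, b, hb, d, hd, e, h1, h2, h3, h4, h5, h6⟩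
  · exact (arm_seg hm hD hx hQ hmx hD1 h1 h2 h3).1.mono (by omega) (by unfold fLL; omega)
  · exact (h2.trans (hop hb h3)).mono (by omega) (by unfold fLL; omega)
  · exact ((h1.trans (hop hb h2)).trans (h3.ps.trans (arm_seg hm hD hx hQ hmx hD1 h4 h5 h6).1)).mono
      (by omega) (by unfold fLL; omega)

/-- all configurations whose high visits have state in `S` -/
def AS (Q : Finset ℕ) (D : ℕ) (S : Finset ℕ) : Set Cfg :=
  {c | c ∈ Al Q ∧ ((∀ i, (D:ℤ) ≤ c.2 i) → c.1 ∈ S)}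

theorem main_run (hm : ∀ t ∈ T, ∀ i, |t.2.1 i| ≤ (m : ℤ)) {D D1 x x0 : ℕ} (hD : 1 ≤ D)
    (hx : 1 ≤ x) (hQ : Q.card * (D * D) ≤ x) (hmx : m ≤ x) (hD1 : 2 * (fP x * m) ≤ D1)
    (hDD : D + m ≤ D1) (hx0 : 1 ≤ x0) (hQ0 : Q.card ≤ x0) (hm0 : m ≤ x0)
    (hD0 : 2 * (fP x0 * m) ≤ D) :
    ∀ n : ℕ, ∀ S : Finset ℕ, S.card ≤ n → ∀ c c' : Cfg, c ∈ AS Q D S →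
      ReflTransGen (StA T (AS Q D S)) c c' →
      PSl T (4 + 6 * n) ((fLL Q.card x m D1 + fP x0 + 2) * (n + 1)) c c' := by
  intro n
  induction n with
  | zero =>
    intro S hS c c' hc h
    have hS : S = ∅ := by simpa using hS
    subst hS
    have hlo : ∀ a ∈ AS Q D ∅, a ∈ Lo Q D := by
      rintro a ⟨h1, h2⟩
      refine ⟨h1, ?_⟩
      by_contra hcon
      push Not at hcon
      exact absurd (h2 hcon) (by simp)
    refine (lo_run hm hD hx hQ hmx hD1 hDD (hlo c hc) (ReflTransGen.mono ?_ c c' h)).mono (by omega) (by omega)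
    rintro a b ⟨h1, h2, h3⟩
    exact ⟨h1, hlo a h2, hlo b h3⟩
  | succ n IH =>
    intro S hS c c' hc h
    -- first high visit
    have first : (c ∈ Lo Q D ∧ ReflTransGen (StA T (Lo Q D)) c c') ∨
        ∃ e ∈ AS Q D S, (∀ i, (D:ℤ) ≤ e.2 i) ∧ PSl T 4 (fLL Q.card x m D1 + 1) c e ∧
          ReflTransGen (StA T (AS Q D S)) e c' := by
      have hd : ∀ a ∈ AS Q D S, (∀ i, (D:ℤ) ≤ a.2 i) ∨ a ∈ Lo Q D := by
        intro a ha
        by_cases h : ∀ i, (D:ℤ) ≤ a.2 i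
        · exact Or.inl h
        · push Not at h; exact Or.inr ⟨ha.1, h⟩
      induction h with
      | refl =>
        rcases hd c hc with h | h
        · exact Or.inr ⟨c, hc, h, (ps_refl hc.1.2).mono (by simp) (by simp), ReflTransGen.refl⟩
        · exact Or.inl ⟨h, ReflTransGen.refl⟩
      | @tail y z _ hyz ih =>
        rcases ih with ⟨h1, h2⟩ | ⟨e, he, h1, h2, h3⟩
        · rcases hd z hyz.2.2 with h | h
          · right
            exact ⟨z, hyz.2.2, h, (lo_run hm hD hx hQ hmx hD1 hDD h1 h2).trans hyz.1.ps,
              ReflTransGen.refl⟩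
          · left
            refine ⟨h1, h2.tail ⟨hyz.1, ?_, h⟩⟩
            rcases h2.cases_tail with h | ⟨_, _, h⟩
            · rw [h]; exact h1
            · exact h.2.2
        · exact Or.inr ⟨e, he, h1, h2, h3.tail hyz⟩
    rcases first with ⟨h1, h2⟩ | ⟨e, he, heO, h2, h3⟩
    · refine (lo_run hm hD hx hQ hmx hD1 hDD h1 h2).mono (by omega) ?_
      exact le_trans (by omega) (Nat.le_mul_of_pos_right _ (by omega))
    have heS : e.1 ∈ S := he.2 heO
    have last : ∃ f, f ∈ AS Q D S ∧ (∀ i, (D:ℤ) ≤ f.2 i) ∧ f.1 = e.1 ∧ ReflTransGen (StA T (AS Q D S)) e f ∧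
        (f = c' ∨ ∃ g ∈ AS Q D (S.erase e.1), Stp T f g ∧
          ReflTransGen (StA T (AS Q D (S.erase e.1))) g c') := by
      clear h
      induction h3 with
      | refl => exact ⟨e, he, heO, rfl, ReflTransGen.refl, Or.inl rfl⟩
      | @tail y z hy hyz ih =>
        by_cases hz : (∀ i, (D:ℤ) ≤ z.2 i) ∧ z.1 = e.1
        · exact ⟨z, hyz.2.2, hz.1, hz.2, hy.tail hyz, Or.inl rfl⟩
        · have hz' : z ∈ AS Q D (S.erase e.1) := by
            refine ⟨hyz.2.2.1, fun h => Finset.mem_erase.2 ⟨fun hh => hz ⟨h, hh⟩, hyz.2.2.2 h⟩⟩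
          obtain ⟨f, hf, hfO, hfe, h4, h5⟩ := ih
          refine ⟨f, hf, hfO, hfe, h4, Or.inr ?_⟩
          rcases h5 with rfl | ⟨g, hg, h5, h6⟩
          · exact ⟨z, hz', hyz.1, ReflTransGen.refl⟩
          · refine ⟨g, hg, h5, h6.tail ⟨hyz.1, ?_, hz'⟩⟩
            rcases h6.cases_tail with h | ⟨_, _, h⟩
            · rw [h]; exact hg
            · exact h.2.2
    obtain ⟨f, hf, hfO, hfe, h4, h5⟩ := last
    have hD0' : ((2 * (fP x0 * m) : ℕ) : ℤ) ≤ D := by exact_mod_cast hD0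
    have mid : PSl T 2 (fP x0) e f := by
      refine (segJ (J := ∅) (D := 1) (K := ((f.2 - e.2) 0).natAbs + ((f.2 - e.2) 1).natAbs) hm le_rfl
        (A := AS Q D S) (fun c hc => ⟨hc.1, by simp⟩) he h4 hx0 (by simpa using hQ0) hm0
        (Or.inl ?_) (fun j _ => hD0'.trans (heO j)) (fun j _ => hD0'.trans (hfO j)) ?_).1
      · simp [pj, hfe]
      · intro j
        fin_cases j <;> simp
    have ex : ∀ A : ℕ, A * (n + 1 + 1) = A * (n+1) + A := fun A => by ring
    rw [ex]
    rcases h5 with rfl | ⟨g, hg, h5, h6⟩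
    · exact (h2.trans mid).mono (by omega) (by omega)
    · have := IH (S.erase e.1) (by rw [Finset.card_erase_of_mem heS]; omega) g c' hg h6
      exact (((h2.trans mid).trans h5.ps).trans this).mono (by omega) (by omega)

end

section

open Relation

def PB (f : ℕ → ℕ) : Prop := ∃ k, ∀ x, 2 ≤ x → f x ≤ x ^ k

theorem PB.id : PB (fun x => x) := ⟨1, fun x _ => by simp⟩
theorem PB.const (c : ℕ) : PB (fun _ => c) :=
  ⟨c, fun x hx => (Nat.lt_two_pow_self).le.trans (Nat.pow_le_pow_left hx c)⟩
theorem PB.mul {f g : ℕ → ℕ} (hf : PB f) (hg : PB g) : PB (fun x => f x * g x) := by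
  obtain ⟨a, ha⟩ := hf
  obtain ⟨b, hb⟩ := hg
  exact ⟨a + b, fun x hx => by rw [pow_add]; exact Nat.mul_le_mul (ha x hx) (hb x hx)⟩
theorem PB.add {f g : ℕ → ℕ} (hf : PB f) (hg : PB g) : PB (fun x => f x + g x) := by
  obtain ⟨a, ha⟩ := hf
  obtain ⟨b, hb⟩ := hg
  refine ⟨a + b + 1, fun x hx => ?_⟩
  have h1 := (ha x hx).trans (Nat.pow_le_pow_right (by omega) (show a ≤ a + b by omega))
  have h2 := (hb x hx).trans (Nat.pow_le_pow_right (by omega) (show b ≤ a + b by omega))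
  have h3 := Nat.mul_le_mul_left (x^(a+b)) hx
  rw [pow_succ]
  show f x + g x ≤ _
  omega
theorem PB.sq {f : ℕ → ℕ} (hf : PB f) : PB (fun x => f x ^ 2) := by
  have := hf.mul hf
  simpa [pow_two] using this

theorem PB.fM2 {g : ℕ → ℕ} (h : PB g) : PB (fun x => fM2 (g x)) :=
  (PB.const 2).mul h.sq
theorem PB.fk2 {g : ℕ → ℕ} (h : PB g) : PB (fun x => fk2 (g x)) :=
  ((PB.const 2).mul h).mul (PB.const 1)
theorem PB.fM3 {g : ℕ → ℕ} (h : PB g) : PB (fun x => fM3 (g x)) :=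
  (PB.const 2).mul h.fM2.sq
theorem PB.fk3 {g : ℕ → ℕ} (h : PB g) : PB (fun x => fk3 (g x)) :=
  ((PB.const 2).mul h.fM2).mul h.fk2
theorem PB.fLam {g k : ℕ → ℕ} (h : PB g) (h' : PB k) : PB (fun x => fLam (g x) (k x)) :=
  (((((PB.const 8).mul h.fM3).mul h).mul h').add (PB.const 1)).add h
theorem PB.fx {g : ℕ → ℕ} (h : PB g) : PB (fun x => fx (g x)) :=
  h.fM3.mul (((PB.const 2).mul h.fM3).mul h)
theorem PB.fk {g k : ℕ → ℕ} (h : PB g) (h' : PB k) : PB (fun x => fk (g x) (k x)) :=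
  (h.fM3.mul (((PB.const 2).mul h.fM3).mul h')).add
    ((((((PB.const 4).mul h.fM3).mul h).mul h').add (PB.const 1)).mul h.fk3)
theorem PB.fD {g k : ℕ → ℕ} (h : PB g) (h' : PB k) : PB (fun x => fD (g x) (k x)) :=
  (((PB.const 2).mul h.fM3).mul h.fM3).mul ((h.fLam h').mul (h.fLam h'))
theorem PB.fe {g k : ℕ → ℕ} (h : PB g) (h' : PB k) : PB (fun x => fe (g x) (k x)) :=
  ((((((PB.const 2).mul h).add (PB.const 1)).sq.mul h).mul (PB.const 1)).add
    (((((PB.const 2).mul h.fM2).add (PB.const 1)).sq.mul h.fM2).mul h.fk2)).add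
    (((((PB.const 2).mul h.fM3).add (PB.const 1)).sq.mul (h.fD h')).mul h.fk3)
theorem PB.fl {g : ℕ → ℕ} (h : PB g) : PB (fun x => fl (g x)) :=
  ((h.mul h).fM3.mul h).add (((h.mul h).fx.mul (h.mul h)).add
    (((h.mul h).fk ((h.mul h).mul h)).mul h))
theorem PB.fP {g : ℕ → ℕ} (h : PB g) : PB (fun x => fP (g x)) :=
  ((h.mul h).add (((h.mul h).fe ((h.mul h).mul h)).mul h)).add (h.fl.add h.fl)

def gD (X : ℕ) := 2 * (fP X * X) + 1
def gx (X : ℕ) := X * (gD X * gD X) + X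
def gD1 (X : ℕ) := 2 * (fP (gx X) * X) + (gD X + X)
def gB (X : ℕ) := (fLL X (gx X) X (gD1 X) + fP X + 2) * (X + 1)

theorem gD_pb : PB gD := ((PB.const 2).mul (PB.id.fP.mul PB.id)).add (PB.const 1)
theorem gx_pb : PB gx := (PB.id.mul (gD_pb.mul gD_pb)).add PB.id
theorem gD1_pb : PB gD1 := ((PB.const 2).mul (gx_pb.fP.mul PB.id)).add (gD_pb.add PB.id)
theorem fN_pb : PB (fun X => fN (gx X) X (gD1 X)) :=
  ((PB.const 1).add (gx_pb.fP.add (((PB.const 2).mul ((gD1_pb.add PB.id).add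
    (gx_pb.fP.mul PB.id))).mul gx_pb.fP))).add (PB.const 1)
theorem fLL_pb : PB (fun X => fLL X (gx X) X (gD1 X)) :=
  ((gx_pb.fP.add (PB.const 1)).add (((PB.id.mul (gD1_pb.mul gD1_pb)).mul
    (PB.id.mul (gD1_pb.mul gD1_pb))).mul fN_pb)).add ((PB.const 1).add gx_pb.fP)
theorem gB_pb : PB gB := ((fLL_pb.add PB.id.fP).add (PB.const 2)).mul (PB.id.add (PB.const 1))

theorem fLL_mono {q q' x m m' D : ℕ} (hq : q ≤ q') (hm : m ≤ m') : fLL q x m D ≤ fLL q' x m' D := by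
  unfold fLL fN; gcongr

variable {T : Finset (Trans 2)} {Q : Finset ℕ}

theorem tnorm_bd : ∀ t ∈ T, ∀ i, |t.2.1 i| ≤ ((tnorm T : ℕ) : ℤ) := by
  intro t ht i
  have h1 : vnorm t.2.1 ≤ tnorm T := Finset.le_sup (f := fun t : Trans 2 => vnorm t.2.1) ht
  have h2 : (t.2.1 i).natAbs ≤ vnorm t.2.1 :=
    Finset.le_sup (f := fun i => (t.2.1 i).natAbs) (Finset.mem_univ i)
  rw [Int.abs_eq_natAbs]
  exact_mod_cast h2.trans h1

theorem run_rtg (hT : ∀ t ∈ T, t.1 ∈ Q ∧ t.2.2 ∈ Q) {p q : ℕ} {u v : Vec 2} {π : List (Trans 2)}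
    (hp : p ∈ Q) (h : Run T (NatSet 2) p u q v π) :
    (p, u) ∈ Al Q ∧ ReflTransGen (StA T (Al Q)) (p, u) (q, v) := by
  induction π generalizing p u with
  | nil =>
    obtain ⟨rfl, h, rfl⟩ := run_nil_iff.1 h
    exact ⟨⟨hp, h⟩, ReflTransGen.refl⟩
  | cons t π ih =>
    obtain ⟨h1, rfl, h3, h4⟩ := run_cons_iff.1 h
    obtain ⟨h5, h6⟩ := ih (hT t h1).2 h4
    exact ⟨⟨hp, h3⟩, ReflTransGen.head ⟨⟨t.2.1, h1, h3, h5.2, rfl⟩, ⟨hp, h3⟩, h5⟩ h6⟩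

theorem lists_finite {α : Type*} {s : Set α} (hs : s.Finite) (n : ℕ) :
    {l : List α | l.length ≤ n ∧ ∀ a ∈ l, a ∈ s}.Finite := by
  induction n with
  | zero =>
    refine (Set.finite_singleton ([] : List α)).subset ?_
    rintro l ⟨h, -⟩
    simpa using h
  | succ n ih =>
    refine ((Set.finite_singleton ([] : List α)).union (hs.image2 List.cons ih)).subset ?_
    rintro l ⟨h, h'⟩
    cases l with
    | nil => left; rfl
    | cons a l =>
      right
      exact ⟨a, h' a (by simp), l, ⟨by simpa using h, fun b hb => h' b (by simp [hb])⟩, rfl⟩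

theorem lps_finite (B K : ℕ) :
    {ρ : LPS 2 | (∃ p q, IsLPSFrom T p q ρ) ∧ lpsLen ρ ≤ B ∧ numCycles ρ ≤ K}.Finite := by
  have h1 := lists_finite (T.finite_toSet) B
  have h2 := lists_finite (h1.prod h1) K
  refine (h1.prod h2).subset ?_
  rintro ⟨α, l⟩ ⟨⟨p, q, h, -, -⟩, hB, hK⟩
  refine ⟨⟨?_, ?_⟩, hK, ?_⟩
  · simp [lpsLen, lpsSupport] at hB ⊢; omega
  · intro a ha; exact h a (by simp [lpsSupport]; exact Or.inl ha)
  · rintro ⟨β, γ⟩ hs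
    have hlen : β.length + γ.length ≤ B := by
      refine le_trans ?_ hB
      unfold lpsLen lpsSupport
      rw [List.length_append]
      refine le_trans ?_ (Nat.le_add_left _ _)
      rw [← List.length_append]
      have hmem : β ++ γ ∈ List.map (fun s : List (Trans 2) × List (Trans 2) => s.1 ++ s.2) l :=
        List.mem_map.2 ⟨(β, γ), hs, rfl⟩
      exact (List.sublist_flatten_of_mem hmem).length_le
    refine ⟨⟨by simp; omega, ?_⟩, by simp; omega, ?_⟩
    · intro a ha
      refine h a (List.mem_append_right _ (List.mem_flatten.2 ⟨_, List.mem_map.2 ⟨_, hs, rfl⟩, ?_⟩))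
      exact List.mem_append_left _ ha
    · intro a ha
      refine h a (List.mem_append_right _ (List.mem_flatten.2 ⟨_, List.mem_map.2 ⟨_, hs, rfl⟩, ?_⟩))
      exact List.mem_append_right _ ha

theorem exists_ps (hT : ∀ t ∈ T, t.1 ∈ Q ∧ t.2.2 ∈ Q) {p q : ℕ} {u v : Vec 2} (hp : p ∈ Q)
    (h : Reach T (NatSet 2) p u q v) (hX : 2 ≤ Q.card + tnorm T) :
    PSl T (4 + 6 * Q.card) (gB (Q.card + tnorm T)) (p, u) (q, v) := by
  obtain ⟨π, h⟩ := h
  obtain ⟨h1, h2⟩ := run_rtg hT hp h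
  set X := Q.card + tnorm T with hXd
  have hA : ∀ a ∈ Al Q, a ∈ AS Q (gD X) Q := fun a ha => ⟨ha, fun _ => ha.1⟩
  have hQX : Q.card ≤ X := by omega
  have hmX : tnorm T ≤ X := by omega
  have := main_run (T := T) (Q := Q) (m := tnorm T) (D := gD X) (D1 := gD1 X) (x := gx X) (x0 := X)
    tnorm_bd (by unfold gD; omega) (by unfold gx; omega)
    ((Nat.mul_le_mul_right _ hQX).trans (by unfold gx; omega)) (by unfold gx; omega)
    (by have := Nat.mul_le_mul_left (fP (gx X)) hmX; unfold gD1; omega)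
    (by unfold gD1; omega) (by omega) hQX hmX
    (by have := Nat.mul_le_mul_left (fP X) hmX; unfold gD; omega)
    Q.card Q le_rfl (p, u) (q, v) (hA _ h1)
    (ReflTransGen.mono (fun a b h => ⟨h.1, hA a h.2.1, hA b h.2.2⟩) _ _ h2)
  refine this.mono le_rfl ?_
  unfold gB
  have := fLL_mono (x := gx X) (D := gD1 X) hQX hmX
  gcongr

end

/-- The reachability relation of any 2-VASS is captured by a
finite set of linear path schemes of polynomial length with quadratically many
cycles. -/
theorem statement0 :
    ∃ c₁ c₂ : ℕ, ∀ (Q : Finset ℕ) (T : Finset (Trans 2)),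
      (∀ t ∈ T, t.1 ∈ Q ∧ t.2.2 ∈ Q) →
      ∃ S : Finset (LPS 2),
        (∀ ρ ∈ S, ∃ p q, IsLPSFrom T p q ρ) ∧
        (∀ p ∈ Q, ∀ q ∈ Q, ∀ u v : Vec 2, u ∈ NatSet 2 → v ∈ NatSet 2 →
          (Reach T (NatSet 2) p u q v ↔ SReach T S (NatSet 2) p u q v)) ∧
        (∀ ρ ∈ S, lpsLen ρ ≤ (Q.card + tnorm T) ^ c₁) ∧
        (∀ ρ ∈ S, numCycles ρ ≤ c₂ * Q.card ^ 2) := by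
  obtain ⟨c₁, hc₁⟩ := gB_pb
  refine ⟨c₁, 10, fun Q T hT => ?_⟩
  have fin := lps_finite (T := T) ((Q.card + tnorm T) ^ c₁) (10 * Q.card ^ 2)
  refine ⟨fin.toFinset, fun ρ h => ((Set.Finite.mem_toFinset _).1 h).1, ?_,
    fun ρ h => ((Set.Finite.mem_toFinset _).1 h).2.1, fun ρ h => ((Set.Finite.mem_toFinset _).1 h).2.2⟩
  intro p hp q hq u v hu hv
  constructor
  · intro h
    have hQ : 1 ≤ Q.card := Finset.card_pos.2 ⟨p, hp⟩
    have : PSl T (10 * Q.card ^ 2) ((Q.card + tnorm T) ^ c₁) (p, u) (q, v) := by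
      by_cases hX : 2 ≤ Q.card + tnorm T
      · refine (exists_ps hT hp h hX).mono ?_ (hc₁ _ hX)
        nlinarith
      · have h1 : Q.card = 1 := by omega
        have h2 : tnorm T = 0 := by omega
        have hpq : p = q := Finset.card_le_one.1 h1.le p hp q hq
        have huv : u = v := by
          obtain ⟨π, hr⟩ := h
          have hz : ∀ t ∈ T, t.2.1 = 0 := by
            intro t ht
            funext i
            have := tnorm_bd t ht i
            rw [h2] at this
            simpa using this
          have : disp π = 0 := by
            unfold disp
            apply List.sum_eq_zero
            intro z hz'
            obtain ⟨t, ht, rfl⟩ := List.mem_map.1 hz'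
            exact hz t (hr.1 t ht)
          have e := hr.2.2.2.1
          rw [this, add_zero] at e
          exact e.symm
        subst hpq huv
        exact (ps_refl hu).mono (by simp) (by simp)
    obtain ⟨k, hk, n, hn, hps⟩ := this
    obtain ⟨ρ, e, h1, h2, h3, h4, h5⟩ := hps.lps
    refine ⟨ρ, (Set.Finite.mem_toFinset _).2 ⟨⟨p, q, h1⟩, by omega, by omega⟩, lpsWord ρ e,
      ⟨e, by omega, rfl⟩, h5⟩
  · rintro ⟨ρ, -, π, -, h⟩
    exact ⟨π, h⟩

end VASS
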